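/- Let 𝓕 be a ratio-sharp EKR-set of chambers, let s ∈ [n] and let S be a totally isotropic s-space. Set X = #{C ∈ 𝓕 : C_s = S}, Y = #{C ∈ 𝓕 : S ∩ C_s^⊥ = {0}}, Z = #{C ∈ 𝓕 : C_s ≠ S and S ∩ C_s^⊥ ≠ {0}}, E = 2ns − s(3s−1)/2 − n and D = s(s−1)/2 + (n−s)². Then: (a) Y = q^E · (z_s · z_{n−s} · Φ_s^n − X); (b) if S is heavy, then X = z_s · z_{n−s} · Φ_s^n and Z = Φ_1^n · z_n − z_s · z_{n−s} · Φ_s^n; (c) if S is light, then X ≤ z_s · z_{n−s} · Φ_s^n − q^D and Z ≤ Φ_1^n · z_n − z_s · z_{n−s} · Φ_s^n − (q^E − 1) · q^D. -/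

import Mathlib

open scoped Classical

open Module

section Defs

variable {F V : Type} [Field F] [AddCommGroup V] [Module F V]

/-- The orthogonal complement of a subspace with respect to a bilinear form. -/
def bperp (B : V →ₗ[F] V →ₗ[F] F) (W : Submodule F V) : Submodule F V :=
  ⨅ w ∈ W, LinearMap.ker (B w)

/-- A subspace is totally isotropic for `B`. -/
def IsTotIso (B : V →ₗ[F] V →ₗ[F] F) (W : Submodule F V) : Prop :=
  ∀ u ∈ W, ∀ w ∈ W, B u w = 0

/-- `B` is an alternating form. -/
def IsAltForm (B : V →ₗ[F] V →ₗ[F] F) : Prop := ∀ v, B v v = 0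

/-- `B` is nondegenerate. -/
def NondegForm (B : V →ₗ[F] V →ₗ[F] F) : Prop := ∀ v, (∀ w, B v w = 0) → v = 0

/-- A flag of type `J` of totally isotropic subspaces: entries outside `J` are `⊥`. -/
structure SFlag (B : V →ₗ[F] V →ₗ[F] F) (J : Finset ℕ) where
  space : ℕ → Submodule F V
  isotropic : ∀ i ∈ J, IsTotIso B (space i)
  finrank_eq : ∀ i ∈ J, Module.finrank F (space i) = i
  mono : ∀ i ∈ J, ∀ j ∈ J, i ≤ j → space i ≤ space j
  eq_bot : ∀ i, i ∉ J → space i = ⊥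

/-- Two flags of type `J` are opposite. -/
def FlagOpp {B : V →ₗ[F] V →ₗ[F] F} {J : Finset ℕ} (C C' : SFlag B J) : Prop :=
  ∀ i ∈ J, bperp B (C.space i) ⊓ C'.space i = ⊥

/-- An EKR-set of flags of type `J`: no two members are opposite. -/
def IsEKRFlags {B : V →ₗ[F] V →ₗ[F] F} {J : Finset ℕ} (𝓕 : Set (SFlag B J)) : Prop :=
  ∀ C ∈ 𝓕, ∀ C' ∈ 𝓕, ¬ FlagOpp C C'

/-- Two subspaces are opposite. -/
def SpaceOpp (B : V →ₗ[F] V →ₗ[F] F) (S T : Submodule F V) : Prop :=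
  bperp B S ⊓ T = ⊥

/-- An EKR-set of totally isotropic `s`-spaces: no two members are opposite. -/
def IsEKRSpaces (B : V →ₗ[F] V →ₗ[F] F) (s : ℕ) (𝓕 : Set (Submodule F V)) : Prop :=
  (∀ S ∈ 𝓕, IsTotIso B S ∧ Module.finrank F S = s) ∧
    ∀ S ∈ 𝓕, ∀ T ∈ 𝓕, ¬ SpaceOpp B S T

/-- An `s`-space `S` is heavy with respect to a set `𝓕` of flags: every flag whose
`s`-th entry equals `S` belongs to `𝓕`. -/
def Heavy {B : V →ₗ[F] V →ₗ[F] F} {J : Finset ℕ} (𝓕 : Set (SFlag B J)) (s : ℕ)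
    (S : Submodule F V) : Prop :=
  ∀ C : SFlag B J, C.space s = S → C ∈ 𝓕

end Defs

/-- `z_k = ∏_{i=1}^k (q^i-1)/(q-1)`. -/
noncomputable def zpol (q k : ℕ) : ℝ :=
  ∏ i ∈ Finset.Icc 1 k, ((q : ℝ) ^ i - 1) / ((q : ℝ) - 1)

/-- The Gaussian binomial coefficient `[m choose k]_q` as a real number. -/
noncomputable def gaussq (q m k : ℕ) : ℝ :=
  ∏ i ∈ Finset.Icc 1 k, ((q : ℝ) ^ (m - k + i) - 1) / ((q : ℝ) ^ i - 1)

/-- `Φ_m^s` in `PS(n,1,q)`: the number of totally isotropic `s`-spaces containing a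
fixed totally isotropic `m`-space. -/
noncomputable def PhiP (q n m s : ℕ) : ℝ :=
  gaussq q (n - m) (s - m) * ∏ i ∈ Finset.Icc 1 (s - m), ((q : ℝ) ^ (n - m + 1 - i) + 1)

section AbstractAlg

lemma mul_neg_iff_pos_left_aux {a b : ℝ} (ha : 0 < a) : a * b < 0 ↔ b < 0 := by
  constructor
  · intro h; by_contra hb; push Not at hb; nlinarith [mul_nonneg ha.le hb]
  · intro h; exact mul_neg_of_pos_of_neg ha h

variable {E : Type*} [NormedAddCommGroup E] [InnerProductSpace ℝ E]

/-- Jucys–Murphy type elements. -/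
def JM {R : Type*} [Monoid R] (t : ℕ → R) : ℕ → R
  | 0 => t 0
  | k + 1 => t (k + 1) * JM t k * t (k + 1)

/-- products of the Jucys–Murphy elements. -/
def JMprod {R : Type*} [Monoid R] (t : ℕ → R) : ℕ → R
  | 0 => 1
  | k + 1 => JMprod t k * JM t k

lemma JM_map {R S : Type*} [Monoid R] [Monoid S] (φ : R →* S) (t : ℕ → R) (k : ℕ) :
    φ (JM t k) = JM (fun i => φ (t i)) k := by
  induction k with
  | zero => rfl
  | succ k ih => simp only [JM, map_mul, ih]

lemma JMprod_map {R S : Type*} [Monoid R] [Monoid S] (φ : R →* S) (t : ℕ → R) (k : ℕ) :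
    φ (JMprod t k) = JMprod (fun i => φ (t i)) k := by
  induction k with
  | zero => simp only [JMprod, map_one]
  | succ k ih => simp only [JMprod, map_mul, ih, JM_map]

lemma JM_commute_far (t : ℕ → Module.End ℝ E) (n : ℕ)
    (hfar : ∀ i j, i + 2 ≤ j → j < n → Commute (t i) (t j)) :
    ∀ i j, i + 2 ≤ j → j < n → Commute (JM t i) (t j) := by
  intro i
  induction i with
  | zero => intro j h1 h2; exact hfar 0 j h1 h2
  | succ i ih =>
    intro j h1 h2
    have h := hfar (i+1) j h1 h2
    exact ((h.mul_left (ih j (by omega) h2)).mul_left h)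

lemma t_isUnit (q : ℝ) (hq : 1 < q) (T : Module.End ℝ E)
    (h : T * T = (q - 1) • T + q • (1 : Module.End ℝ E)) : IsUnit T := by
  have hq0 : q ≠ 0 := by positivity
  have e1 : T * (q⁻¹ • (T - (q-1) • (1 : Module.End ℝ E))) = 1 := by
    rw [mul_smul_comm, mul_sub, h]; simp [smul_smul, hq0]
  have e2 : (q⁻¹ • (T - (q-1) • (1 : Module.End ℝ E))) * T = 1 := by
    rw [smul_mul_assoc, sub_mul, h]; simp [smul_smul, hq0]
  exact ⟨⟨T, _, e1, e2⟩, rfl⟩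

lemma JM_isUnit (q : ℝ) (hq : 1 < q) (t : ℕ → Module.End ℝ E) (n : ℕ)
    (hquad : ∀ i < n, t i * t i = (q - 1) • t i + q • (1 : Module.End ℝ E)) :
    ∀ k < n, IsUnit (JM t k) := by
  intro k
  induction k with
  | zero => intro h; exact t_isUnit q hq _ (hquad 0 h)
  | succ k ih =>
    intro h
    have := t_isUnit q hq _ (hquad (k+1) h)
    exact (this.mul (ih (by omega))).mul this

lemma JMprod_isUnit (q : ℝ) (hq : 1 < q) (t : ℕ → Module.End ℝ E) (n : ℕ)
    (hquad : ∀ i < n, t i * t i = (q - 1) • t i + q • (1 : Module.End ℝ E)) :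
    ∀ k ≤ n, IsUnit (JMprod t k) := by
  intro k
  induction k with
  | zero => intro h; exact isUnit_one
  | succ k ih =>
    intro h
    exact (ih (by omega)).mul (JM_isUnit q hq t n hquad k (by omega))

lemma JM_commute_near (q : ℝ) (hq : 1 < q) (t : ℕ → Module.End ℝ E) (n : ℕ)
    (hquad : ∀ i < n, t i * t i = (q - 1) • t i + q • (1 : Module.End ℝ E))
    (hcen : ∀ k ≤ n, ∀ i < k, Commute (t i) (JMprod t k)) :
    ∀ k < n, ∀ i < k, Commute (t i) (JM t k) := by
  intro k hk i hi
  have h1 := hcen k hk.le i hi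
  have h2 := hcen (k+1) hk i (by omega)
  have hu := JMprod_isUnit q hq t n hquad k hk.le
  apply hu.mul_left_cancel
  have h3 : t i * (JMprod t k * JM t k) = JMprod t k * JM t k * t i := h2
  calc JMprod t k * (t i * JM t k) = (JMprod t k * t i) * JM t k := by rw [mul_assoc]
    _ = t i * JMprod t k * JM t k := by rw [h1.eq]
    _ = _ := by rw [mul_assoc, h3, mul_assoc]

lemma JM_commute_JM (q : ℝ) (hq : 1 < q) (t : ℕ → Module.End ℝ E) (n : ℕ)
    (hquad : ∀ i < n, t i * t i = (q - 1) • t i + q • (1 : Module.End ℝ E))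
    (hcen : ∀ k ≤ n, ∀ i < k, Commute (t i) (JMprod t k)) :
    ∀ k < n, ∀ i < k, Commute (JM t i) (JM t k) := by
  intro k hk i
  induction i with
  | zero => intro hi; exact JM_commute_near q hq t n hquad hcen k hk 0 hi
  | succ i ih =>
    intro hi
    have h := JM_commute_near q hq t n hquad hcen k hk (i+1) hi
    exact (h.mul_left (ih (by omega))).mul_left h

lemma JM_symm (t : ℕ → Module.End ℝ E) (n : ℕ) (hsym : ∀ i < n, (t i).IsSymmetric) :
    ∀ k < n, (JM t k).IsSymmetric := by
  intro k
  induction k with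
  | zero => intro h; exact hsym 0 h
  | succ k ih =>
    intro h x y
    have h1 := hsym (k+1) h
    have h2 := ih (by omega)
    simp only [JM, Module.End.mul_apply]
    rw [h1, h2, h1]

/-- exponent bound for joint eigenvalues -/
lemma JM_weight (q : ℝ) (hq : 1 < q) (t : ℕ → Module.End ℝ E) (n : ℕ)
    (hquad : ∀ i < n, t i * t i = (q - 1) • t i + q • (1 : Module.End ℝ E))
    (hfar : ∀ i j, i + 2 ≤ j → j < n → Commute (t i) (t j)) :
    ∀ j < n, ∀ l : ℕ → ℝ, (∃ v : E, v ≠ 0 ∧ ∀ i ≤ j, JM t i v = l i • v) →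
      (0 < l j → |l j| ≤ q ^ (j + 1 + ((Finset.range j).filter (fun i => 0 < l i)).card)) ∧
      (l j < 0 → |l j| ≤ q ^ (j + ((Finset.range j).filter (fun i => l i < 0)).card)) := by
  intro j
  have hq0 : 0 < q := by linarith
  induction j with
  | zero =>
    rintro hj l ⟨v, hv, hl⟩
    have h0 := hl 0 le_rfl
    simp only [JM] at h0
    have h1 : t 0 (t 0 v) = (q-1) • t 0 v + q • v := by
      have := congrArg (fun T : Module.End ℝ E => T v) (hquad 0 hj)
      simpa using this
    rw [h0, map_smul, h0, smul_smul, smul_smul, ← add_smul] at h1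
    have h2 := smul_left_injective ℝ hv h1
    have h3 : (l 0 - q) * (l 0 + 1) = 0 := by linarith
    rcases mul_eq_zero.mp h3 with h | h
    · have : l 0 = q := by linarith
      rw [this]
      refine ⟨fun _ => by simp [abs_of_pos hq0], fun h => by linarith⟩
    · have : l 0 = -1 := by linarith
      rw [this]
      refine ⟨fun h => by linarith, fun _ => by simp⟩
  | succ j ih =>
    rintro hj l ⟨v, hv, hl⟩
    set T := t (j+1) with hT
    have hTv : T (T v) = (q-1) • T v + q • v := by
      have := congrArg (fun T : Module.End ℝ E => T v) (hquad (j+1) hj)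
      simpa using this
    set a := l (j+1) / q with ha
    have hla : l (j+1) = q * a := by rw [ha]; field_simp
    have hLj := hl j (by omega)
    have hLj1 : T (JM t j (T v)) = (q * a) • v := by
      have := hl (j+1) le_rfl
      rw [hla] at this
      simpa [JM] using this
    -- L_j T v = a (T v - (q-1) v)
    have hkey : JM t j (T v) = a • (T v) - (a * (q-1)) • v := by
      have hTq : ∀ x, T (T x) = (q-1) • T x + q • x := by
        intro x
        have := congrArg (fun T : Module.End ℝ E => T x) (hquad (j+1) hj)
        simpa using this
      have h1 := congrArg T hLj1
      rw [hTq, hLj1, map_smul] at h1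
      have h2 : q • JM t j (T v) = q • (a • (T v) - (a * (q-1)) • v) := by
        rw [add_comm, ← eq_sub_iff_add_eq] at h1
        rw [h1]
        module
      exact smul_right_injective E hq0.ne' h2
    by_cases hcase : a = l j ∨ a = q * l j ∨ q * a = l j
    · -- no swap
      have hab : |a| ≤ q * |l j| ∧ (0 < a ↔ 0 < l j) ∧ (a < 0 ↔ l j < 0) := by
        rcases hcase with h | h | h
        · rw [h]; refine ⟨?_, Iff.rfl, Iff.rfl⟩; nlinarith [abs_nonneg (l j)]
        · rw [h]; refine ⟨by rw [abs_mul, abs_of_pos hq0], ?_, ?_⟩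
          · exact mul_pos_iff_of_pos_left hq0
          · exact mul_neg_iff_pos_left_aux hq0
        · rw [← h]; refine ⟨?_, ?_, ?_⟩
          · rw [abs_mul, abs_of_pos hq0, ← mul_assoc]
            nlinarith [abs_nonneg a, mul_pos hq0 hq0, mul_self_nonneg (q-1), mul_nonneg (abs_nonneg a) (by nlinarith : 0 ≤ q * q - 1)]
          · exact (mul_pos_iff_of_pos_left hq0).symm
          · exact (mul_neg_iff_pos_left_aux hq0).symm
      obtain ⟨i1, i2⟩ := ih (by omega) l ⟨v, hv, fun i hi => hl i (by omega)⟩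
      obtain ⟨hb, hp, hn⟩ := hab
      have hfin : ∀ e, |l j| ≤ q ^ e → |l (j+1)| ≤ q ^ (e + 2) := by
        intro e he
        rw [hla, abs_mul, abs_of_pos hq0]
        calc q * |a| ≤ q * (q * |l j|) := by gcongr
          _ ≤ q * (q * q ^ e) := by gcongr
          _ = _ := by ring
      constructor
      · intro h
        have hpos : 0 < l j := by
          rw [← hp]; rw [hla] at h; exact (mul_pos_iff_of_pos_left hq0).mp h
        have := hfin _ (i1 hpos)
        rw [Finset.range_add_one, Finset.filter_insert, if_pos hpos,
          Finset.card_insert_of_notMem (by simp)]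
        convert this using 2; ring
      · intro h
        have hneg : l j < 0 := by
          rw [← hn]; rw [hla] at h; exact (mul_neg_iff_pos_left_aux hq0).mp h
        have := hfin _ (i2 hneg)
        rw [Finset.range_add_one, Finset.filter_insert, if_pos hneg,
          Finset.card_insert_of_notMem (by simp)]
        convert this using 2; ring
    · push Not at hcase
      obtain ⟨c1, c2, c3⟩ := hcase
      have hd : a - l j ≠ 0 := sub_ne_zero.mpr c1
      set c := a * (q-1) / (a - l j) with hc
      have hcd : c * (a - l j) = a * (q-1) := by rw [hc]; field_simp
      set w := T v - c • v with hw
      have hw0 : w ≠ 0 := by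
        intro h0
        have hTc : T v = c • v := sub_eq_zero.mp h0
        rw [hTc, map_smul, hTc, smul_smul, smul_smul, ← add_smul] at hTv
        have h2 := smul_left_injective ℝ hv hTv
        have h3 : (c - q) * (c + 1) = 0 := by linarith
        rcases mul_eq_zero.mp h3 with h | h
        · have hh : c = q := by linarith
          rw [hh] at hcd
          have : q * l j = a := by linarith
          exact c2 this.symm
        · have hh : c = -1 := by linarith
          rw [hh] at hcd
          exact c3 (by linarith)
      obtain ⟨i1, i2⟩ := ih (by omega) (Function.update l j a) ⟨w, hw0, by
        intro i hi
        rcases Nat.lt_or_ge i j with hij | hij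
        · rw [Function.update_of_ne (by omega)]
          have hcomm := JM_commute_far t n hfar i (j+1) (by omega) hj
          have : JM t i (T v) = T (JM t i v) := by
            have := congrArg (fun S : Module.End ℝ E => S v) hcomm.eq
            simpa using this
          rw [hw, map_sub, map_smul, this, hl i (by omega), map_smul]
          module
        · have : i = j := by omega
          subst this
          rw [Function.update_self, hw, map_sub, map_smul, hkey, hLj]
          have : c • l i • v = (c * a - a * (q-1)) • v := by
            rw [smul_smul]; congr 1; linarith
          rw [this]
          module⟩
      rw [Function.update_self] at i1 i2
      have hcp : ∀ (P : ℝ → Prop) [DecidablePred P], ((Finset.range j).filter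
          (fun i => P (Function.update l j a i))).card ≤
          ((Finset.range (j+1)).filter (fun i => P (l i))).card := by
        intro P _
        apply Finset.card_le_card
        intro i hi
        simp only [Finset.mem_filter, Finset.mem_range] at hi ⊢
        rw [Function.update_of_ne (by omega)] at hi
        exact ⟨by omega, hi.2⟩
      have hfin : ∀ e e', e ≤ e' → |a| ≤ q ^ e → |l (j+1)| ≤ q ^ (e' + 1) := by
        intro e e' hee he
        rw [hla, abs_mul, abs_of_pos hq0]
        calc q * |a| ≤ q * q ^ e := by gcongr
          _ ≤ q * q ^ e' := by gcongr; exact hq.le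
          _ = _ := by ring
      constructor
      · intro h
        have hpos : 0 < a := by
          rw [hla] at h; exact (mul_pos_iff_of_pos_left hq0).mp h
        have := hfin _ (j + 1 + ((Finset.range (j+1)).filter (fun i => 0 < l i)).card)
          (by have := hcp (fun x => 0 < x); omega) (i1 hpos)
        convert this using 2; ring
      · intro h
        have hneg : a < 0 := by
          rw [hla] at h; exact (mul_neg_iff_pos_left_aux hq0).mp h
        have := hfin _ (j + ((Finset.range (j+1)).filter (fun i => l i < 0)).card)
          (by have := hcp (fun x => x < 0); omega) (i2 hneg)
        convert this using 2; ring

lemma prod_bound (q : ℝ) (hq : 1 < q) (n : ℕ) (l : ℕ → ℝ) (hl0 : ∀ j < n, l j ≠ 0)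
    (h : ∀ j < n,
      (0 < l j → |l j| ≤ q ^ (j + 1 + ((Finset.range j).filter (fun i => 0 < l i)).card)) ∧
      (l j < 0 → |l j| ≤ q ^ (j + ((Finset.range j).filter (fun i => l i < 0)).card))) :
    - q ^ (n * (n - 1)) ≤ ∏ j ∈ Finset.range n, l j := by
  have hq0 : 0 < q := by linarith
  have main : ∀ k ≤ n, ∃ p b : ℕ, p = ((Finset.range k).filter (fun i => 0 < l i)).card ∧
      b = ((Finset.range k).filter (fun i => l i < 0)).card ∧ p + b = k ∧
      |∏ j ∈ Finset.range k, l j| ≤ q ^ (p * p + p * b + b * (b - 1)) ∧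
      ∏ j ∈ Finset.range k, l j = (-1) ^ b * |∏ j ∈ Finset.range k, l j| := by
    intro k
    induction k with
    | zero => intro _; exact ⟨0, 0, by simp⟩
    | succ k ih =>
      intro hk
      obtain ⟨p, b, hp, hb, hpb, h1, h2⟩ := ih (by omega)
      obtain ⟨i1, i2⟩ := h k (by omega)
      rcases lt_or_gt_of_ne (hl0 k (by omega)) with hneg | hpos
      · refine ⟨p, b + 1, ?_, ?_, by omega, ?_, ?_⟩
        · rw [Finset.range_add_one, Finset.filter_insert, if_neg (by linarith)]; exact hp
        · rw [Finset.range_add_one, Finset.filter_insert, if_pos hneg,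
            Finset.card_insert_of_notMem (by simp), hb]
        · rw [Finset.prod_range_succ, abs_mul]
          calc _ ≤ q ^ (p * p + p * b + b * (b - 1)) * q ^ (k + b) := by
                gcongr; rw [hb]; exact i2 hneg
            _ = _ := by
                rw [← pow_add]; congr 1
                rw [← hpb]
                cases b with
                | zero => simp
                | succ b => simp only [Nat.add_sub_cancel]; ring
        · rw [Finset.prod_range_succ, abs_mul, abs_of_neg hneg, pow_succ]
          nth_rewrite 1 [h2]
          ring
      · refine ⟨p + 1, b, ?_, ?_, by omega, ?_, ?_⟩
        · rw [Finset.range_add_one, Finset.filter_insert, if_pos hpos,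
            Finset.card_insert_of_notMem (by simp), hp]
        · rw [Finset.range_add_one, Finset.filter_insert, if_neg (by linarith)]; exact hb
        · rw [Finset.prod_range_succ, abs_mul]
          calc _ ≤ q ^ (p * p + p * b + b * (b - 1)) * q ^ (k + 1 + p) := by
                gcongr; rw [hp]; exact i1 hpos
            _ = _ := by
                rw [← pow_add]; congr 1
                rw [← hpb]
                ring
        · rw [Finset.prod_range_succ, abs_mul, abs_of_pos hpos]
          nth_rewrite 1 [h2]
          ring
  obtain ⟨p, b, -, -, hpb, h1, h2⟩ := main n le_rfl
  rcases Nat.even_or_odd b with hb | hb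
  · rw [h2, hb.neg_one_pow, one_mul]
    have : 0 < q ^ (n * (n-1)) := by positivity
    linarith [abs_nonneg (∏ j ∈ Finset.range n, l j)]
  · rw [h2, hb.neg_one_pow]
    have : q ^ (p * p + p * b + b * (b - 1)) ≤ q ^ (n * (n-1)) := by
      apply pow_le_pow_right₀ hq.le
      obtain ⟨c, rfl⟩ := hb
      rw [← hpb]
      have e1 : 2 * c + 1 - 1 = 2 * c := by omega
      have e2 : p + (2 * c + 1) - 1 = p + 2 * c := by omega
      rw [e1, e2]
      nlinarith [Nat.zero_le (p * c)]
    linarith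

/-- The lower bound of the quadratic form. -/
theorem JMprod_lower [FiniteDimensional ℝ E] (q : ℝ) (hq : 1 < q) (t : ℕ → Module.End ℝ E) (n : ℕ)
    (hsym : ∀ i < n, (t i).IsSymmetric)
    (hquad : ∀ i < n, t i * t i = (q - 1) • t i + q • (1 : Module.End ℝ E))
    (hfar : ∀ i j, i + 2 ≤ j → j < n → Commute (t i) (t j))
    (hcen : ∀ k ≤ n, ∀ i < k, Commute (t i) (JMprod t k)) (f : E) :
    0 ≤ inner ℝ f (JMprod t n f) + q ^ (n * (n - 1)) * inner ℝ f f := by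
  let L : Fin n → Module.End ℝ E := fun k => JM t k
  have hLs : ∀ i, (L i).IsSymmetric := fun i => JM_symm t n hsym i i.2
  have hLc : Pairwise (Function.onFun Commute L) := by
    intro i j hij
    rcases lt_or_gt_of_ne hij with h | h
    · exact JM_commute_JM q hq t n hquad hcen j j.2 i h
    · exact (JM_commute_JM q hq t n hquad hcen i i.2 j h).symm
  have htop := LinearMap.IsSymmetric.iSup_iInf_eq_top_of_commute hLs hLc
  have horth := LinearMap.IsSymmetric.orthogonalFamily_iInf_eigenspaces hLs
  have hf : f ∈ ⨆ χ : Fin n → ℝ, ⨅ i, Module.End.eigenspace (L i) (χ i) := by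
    rw [htop]; trivial
  obtain ⟨g, hg⟩ := (Submodule.mem_iSup_iff_exists_finsupp _ _).mp hf
  obtain ⟨hg1, hg2⟩ := hg
  -- eigenvalue of JMprod
  have heig : ∀ χ : Fin n → ℝ, ∀ v ∈ ⨅ i, Module.End.eigenspace (L i) (χ i),
      ∃ μ : ℝ, JMprod t n v = μ • v ∧ (v ≠ 0 → - q ^ (n * (n - 1)) ≤ μ) := by
    intro χ v hv
    let l : ℕ → ℝ := fun i => if h : i < n then χ ⟨i, h⟩ else 0
    have hl : ∀ i < n, JM t i v = l i • v := by
      intro i hi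
      have := (Submodule.mem_iInf _).mp hv ⟨i, hi⟩
      have := Module.End.mem_eigenspace_iff.mp this
      simpa [l, hi, L] using this
    have hp : ∀ k ≤ n, JMprod t k v = (∏ j ∈ Finset.range k, l j) • v := by
      intro k
      induction k with
      | zero => intro _; simp [JMprod]
      | succ k ih =>
        intro hk
        simp only [JMprod, Module.End.mul_apply]
        rw [hl k (by omega), map_smul, ih (by omega), Finset.prod_range_succ, smul_smul, mul_comm]
    refine ⟨_, hp n le_rfl, fun hv0 => ?_⟩
    apply prod_bound q hq n l
    · intro j hj h0
      have hu := JM_isUnit q hq t n hquad j hj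
      have := hl j hj
      rw [h0, zero_smul] at this
      have hinj := ((Module.End.isUnit_iff _).mp hu).injective
      exact hv0 (hinj (by rw [this, map_zero]))
    · intro j hj
      exact JM_weight q hq t n hquad hfar j hj l ⟨v, hv0, fun i hi => hl i (by omega)⟩
  choose! μ hμ using fun χ => heig χ (g χ) (hg1 χ)
  have hsum : f = ∑ χ ∈ g.support, g χ := hg2.symm
  have hA : JMprod t n f = ∑ χ ∈ g.support, (μ χ) • g χ := by
    conv_lhs => rw [hsum]
    rw [map_sum]
    exact Finset.sum_congr rfl fun χ _ => (hμ χ).1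
  have hor : ∀ χ χ', χ ≠ χ' → inner ℝ (g χ) (g χ') = 0 := by
    intro χ χ' hne
    exact horth hne ⟨g χ, hg1 χ⟩ ⟨g χ', hg1 χ'⟩
  have e1 : ∀ ν : (Fin n → ℝ) → ℝ, inner ℝ f (∑ χ ∈ g.support, (ν χ) • g χ) =
      ∑ χ ∈ g.support, ν χ * inner ℝ (g χ) (g χ) := by
    intro ν
    conv_lhs => rw [hsum]
    rw [sum_inner]
    apply Finset.sum_congr rfl
    intro χ hχ
    rw [inner_sum, Finset.sum_eq_single χ]
    · rw [inner_smul_right]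
    · intro χ' _ hne
      rw [inner_smul_right, hor _ _ hne.symm, mul_zero]
    · intro h; exact absurd hχ h
  have e2 : inner ℝ f f = ∑ χ ∈ g.support, 1 * inner ℝ (g χ) (g χ) := by
    rw [← e1 (fun _ => 1)]
    simp only [one_smul]
    rw [← hsum]
  rw [hA, e1, e2, Finset.mul_sum, ← Finset.sum_add_distrib]
  apply Finset.sum_nonneg
  intro χ hχ
  have h1 := (hμ χ).2 (Finsupp.mem_support_iff.mp hχ)
  have h2 : (0:ℝ) ≤ inner ℝ (g χ) (g χ) := real_inner_self_nonneg
  nlinarith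

end AbstractAlg

section LinAlg

variable {F V : Type} [Field F] [AddCommGroup V] [Module F V]

lemma mem_bperp {B : V →ₗ[F] V →ₗ[F] F} {W : Submodule F V} {x : V} :
    x ∈ bperp B W ↔ ∀ w ∈ W, B w x = 0 := by
  simp [bperp, Submodule.mem_iInf]

lemma bperp_anti {B : V →ₗ[F] V →ₗ[F] F} {W W' : Submodule F V} (h : W ≤ W') :
    bperp B W' ≤ bperp B W := by
  intro x hx
  rw [mem_bperp] at hx ⊢
  exact fun w hw => hx w (h hw)

lemma bperp_bot {B : V →ₗ[F] V →ₗ[F] F} : bperp B (⊥ : Submodule F V) = ⊤ := by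
  ext x; simp [mem_bperp]

lemma alt_swap {B : V →ₗ[F] V →ₗ[F] F} (halt : IsAltForm B) (x y : V) :
    B x y = - B y x := by
  have h := halt (x + y)
  simp only [map_add, LinearMap.add_apply, halt x, halt y, zero_add, add_zero] at h
  exact eq_neg_of_add_eq_zero_right h

lemma alt_zero {B : V →ₗ[F] V →ₗ[F] F} (halt : IsAltForm B) {x y : V} (h : B x y = 0) :
    B y x = 0 := by
  rw [alt_swap halt, h, neg_zero]

lemma iso_le {B : V →ₗ[F] V →ₗ[F] F} {W : Submodule F V} :
    IsTotIso B W ↔ W ≤ bperp B W := by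
  constructor
  · intro h x hx; rw [mem_bperp]; intro w hw; exact h w hw x hx
  · intro h u hu w hw; exact mem_bperp.mp (h hw) u hu

lemma le_bperp_comm {B : V →ₗ[F] V →ₗ[F] F} (halt : IsAltForm B) {W W' : Submodule F V} :
    W ≤ bperp B W' ↔ W' ≤ bperp B W := by
  constructor <;>
  · intro h x hx
    rw [mem_bperp]; intro w hw
    exact alt_zero halt (mem_bperp.mp (h hw) x hx)

lemma bperp_sup {B : V →ₗ[F] V →ₗ[F] F} {W W' : Submodule F V} :
    bperp B (W ⊔ W') = bperp B W ⊓ bperp B W' := by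
  apply le_antisymm
  · exact le_inf (bperp_anti le_sup_left) (bperp_anti le_sup_right)
  · intro x hx
    rw [mem_bperp]
    intro w hw
    obtain ⟨a, ha, b, hb, rfl⟩ := Submodule.mem_sup.mp hw
    rw [map_add, LinearMap.add_apply, mem_bperp.mp hx.1 a ha, mem_bperp.mp hx.2 b hb, add_zero]

variable [FiniteDimensional F V]

lemma finrank_bperp {B : V →ₗ[F] V →ₗ[F] F} (halt : IsAltForm B) (hnd : NondegForm B)
    (W : Submodule F V) : finrank F W + finrank F (bperp B W) = finrank F V := by
  have h1 : bperp B W = LinearMap.BilinForm.orthogonal B W := by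
    ext x; rw [mem_bperp, LinearMap.BilinForm.mem_orthogonal_iff]
  have hr : LinearMap.IsRefl B := fun x y h => alt_zero halt h
  have hN : LinearMap.BilinForm.orthogonal B (⊤ : Submodule F V) = ⊥ := by
    rw [eq_bot_iff]
    intro x hx
    rw [LinearMap.BilinForm.mem_orthogonal_iff] at hx
    rw [Submodule.mem_bot]
    exact hnd x fun w => alt_zero halt (hx w trivial)
  have h2 := LinearMap.BilinForm.finrank_add_finrank_orthogonal hr W
  rw [hN] at h2
  rw [h1, h2]; simp

lemma bperp_bperp {B : V →ₗ[F] V →ₗ[F] F} (halt : IsAltForm B) (hnd : NondegForm B)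
    (W : Submodule F V) : bperp B (bperp B W) = W := by
  symm
  apply Submodule.eq_of_le_of_finrank_eq
  · exact (le_bperp_comm halt).mp le_rfl
  · have h1 := finrank_bperp halt hnd W
    have h2 := finrank_bperp halt hnd (bperp B W)
    omega

lemma finrank_swap {B : V →ₗ[F] V →ₗ[F] F} (halt : IsAltForm B) (hnd : NondegForm B)
    (X Y : Submodule F V) :
    finrank F (bperp B X ⊓ Y : Submodule F V) + finrank F X =
      finrank F (bperp B Y ⊓ X : Submodule F V) + finrank F Y := by
  have h1 : bperp B X ⊓ Y = bperp B (X ⊔ bperp B Y) := by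
    rw [bperp_sup, bperp_bperp halt hnd]
  have h2 := finrank_bperp halt hnd (X ⊔ bperp B Y)
  have h3 := finrank_bperp halt hnd Y
  have h4 := Submodule.finrank_sup_add_finrank_inf_eq X (bperp B Y)
  rw [h1, inf_comm (bperp B Y) X]
  omega

lemma eq_sup_span {E D : Submodule F V} {x : V} (h : E ≤ D)
    (hd : finrank F D = finrank F E + 1) (hx : x ∈ D) (hxE : x ∉ E) :
    E ⊔ Submodule.span F {x} = D := by
  apply Submodule.eq_of_le_of_finrank_le
  · exact sup_le h (by rwa [Submodule.span_singleton_le_iff_mem])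
  · rw [hd]
    have : E < E ⊔ Submodule.span F {x} := by
      rw [left_lt_sup, Submodule.span_singleton_le_iff_mem]; exact hxE
    exact Submodule.finrank_lt_finrank_of_lt this

lemma finrank_sup_span {E : Submodule F V} {x : V} (hxE : x ∉ E) :
    finrank F (E ⊔ Submodule.span F {x} : Submodule F V) = finrank F E + 1 := by
  have hx0 : x ≠ 0 := fun h => hxE (h ▸ E.zero_mem)
  have h := Submodule.finrank_sup_add_finrank_inf_eq E (Submodule.span F {x})
  rw [finrank_span_singleton hx0] at h
  have : E ⊓ Submodule.span F {x} = ⊥ := by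
    rw [eq_bot_iff]
    rintro y ⟨hy, hy'⟩
    obtain ⟨c, rfl⟩ := Submodule.mem_span_singleton.mp hy'
    by_cases hc : c = 0
    · simp [hc]
    · exact absurd ((E.smul_mem_iff hc).mp hy) hxE
  rw [this] at h
  simpa using h

/-- two distinct covers of `E` meet in `E`. -/
lemma inf_covers {E D D' : Submodule F V} (h : E ≤ D) (h' : E ≤ D')
    (hd : finrank F D = finrank F E + 1) (hd' : finrank F D' = finrank F E + 1) (hne : D ≠ D') :
    D ⊓ D' = E := by
  apply le_antisymm _ (le_inf h h')
  rintro x ⟨hx, hx'⟩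
  by_contra hxE
  exact hne ((eq_sup_span h hd hx hxE).symm.trans (eq_sup_span h' hd' hx' hxE))

lemma natCard_submodule [Fintype F] {q : ℕ} (hq : Fintype.card F = q) (W : Submodule F V) :
    Nat.card W = q ^ finrank F W := by
  rw [Module.natCard_eq_pow_finrank (K := F), Nat.card_eq_fintype_card, hq]

lemma count_covers [Fintype F] {q : ℕ} (hq : Fintype.card F = q) {E G : Submodule F V} (k : ℕ)
    (hEG : E ≤ G) (hk : finrank F G = finrank F E + k) :
    (({U : Submodule F V | E ≤ U ∧ U ≤ G ∧ finrank F U = finrank F E + 1}.ncard : ℕ) : ℝ) =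
      ((q : ℝ) ^ k - 1) / ((q : ℝ) - 1) := by
  have hq1 : 1 < q := hq ▸ Fintype.one_lt_card
  have : Finite V := Module.finite_of_finite F
  have : Fintype V := Fintype.ofFinite V
  have : Fintype (Submodule F V) := Fintype.ofFinite _
  have hcard : ∀ D : Submodule F V, E ≤ D →
      (Finset.univ.filter (fun x : V => x ∈ D ∧ x ∉ E)).card + q ^ finrank F E =
        q ^ finrank F D := by
    intro D hD
    rw [← natCard_submodule hq E, ← natCard_submodule hq D]
    have e1 : Nat.card D = (Finset.univ.filter (fun x : V => x ∈ D)).card := by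
      rw [Nat.card_eq_fintype_card]; exact Fintype.card_subtype _
    have e2 : Nat.card E = (Finset.univ.filter (fun x : V => x ∈ E)).card := by
      rw [Nat.card_eq_fintype_card]; exact Fintype.card_subtype _
    rw [e1, e2, ← Finset.card_union_of_disjoint]
    · congr 1; ext x
      simp only [Finset.mem_union, Finset.mem_filter, Finset.mem_univ, true_and]
      constructor
      · rintro (h | h)
        · exact h.1
        · exact hD h
      · intro h; by_cases hx : x ∈ E
        · exact Or.inr hx
        · exact Or.inl ⟨h, hx⟩
    · rw [Finset.disjoint_filter]; rintro x - h h'; exact h.2 h'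
  set t : Finset (Submodule F V) :=
    Finset.univ.filter (fun U => E ≤ U ∧ U ≤ G ∧ finrank F U = finrank F E + 1) with ht
  have hcount := Finset.card_eq_sum_card_fiberwise (f := fun x : V => E ⊔ Submodule.span F {x})
    (s := Finset.univ.filter (fun x : V => x ∈ G ∧ x ∉ E)) (t := t) (by
      intro x hx
      simp only [Finset.coe_filter, Finset.mem_univ, true_and, Set.mem_ofPred_eq] at hx
      simp only [ht, Finset.coe_filter, Finset.mem_univ, true_and, Set.mem_ofPred_eq]
      exact ⟨le_sup_left, sup_le hEG (by rw [Submodule.span_singleton_le_iff_mem]; exact hx.1),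
        finrank_sup_span hx.2⟩)
  have hfib : ∀ U ∈ t, ((Finset.univ.filter (fun x : V => x ∈ G ∧ x ∉ E)).filter
      (fun x => E ⊔ Submodule.span F {x} = U)).card + q ^ finrank F E
        = q ^ (finrank F E + 1) := by
    intro U hU
    simp only [ht, Finset.mem_filter, Finset.mem_univ, true_and] at hU
    rw [← hU.2.2, ← hcard U hU.1]
    congr 2
    ext x
    simp only [Finset.mem_filter, Finset.mem_univ, true_and]
    constructor
    · rintro ⟨⟨_, h2⟩, h3⟩
      refine ⟨?_, h2⟩
      rw [← h3]
      exact le_sup_right (a := E) (Submodule.mem_span_singleton_self x)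
    · rintro ⟨h1, h2⟩
      exact ⟨⟨hU.2.1 h1, h2⟩, eq_sup_span hU.1 hU.2.2 h1 h2⟩
  have hset : {U : Submodule F V | E ≤ U ∧ U ≤ G ∧ finrank F U = finrank F E + 1} = ↑t := by
    ext U; simp [ht]
  rw [hset, Set.ncard_coe_finset]
  have hG := hcard G hEG
  have hsum : (t.card : ℝ) * ((q:ℝ) ^ (finrank F E + 1) - (q:ℝ) ^ finrank F E) =
      (q:ℝ) ^ (finrank F E + k) - (q:ℝ) ^ finrank F E := by
    have h1 : ((Finset.univ.filter (fun x : V => x ∈ G ∧ x ∉ E)).card : ℝ) =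
        (q:ℝ) ^ (finrank F E + k) - (q:ℝ) ^ finrank F E := by
      rw [eq_sub_iff_add_eq, ← hk]; exact_mod_cast hG
    rw [← h1, hcount]
    push_cast
    rw [Finset.sum_congr rfl (g := fun _ => (q:ℝ) ^ (finrank F E + 1) - (q:ℝ) ^ finrank F E)]
    · rw [Finset.sum_const, nsmul_eq_mul]
    · intro U hU
      rw [eq_sub_iff_add_eq]; exact_mod_cast hfib U hU
  have hq1' : (1:ℝ) < q := by exact_mod_cast hq1
  have hpos : (0:ℝ) < (q:ℝ) ^ finrank F E := by positivity
  rw [eq_div_iff (by linarith)]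
  apply mul_left_cancel₀ hpos.ne'
  rw [pow_add, pow_add] at hsum
  linarith

lemma count_covers_avoid [Fintype F] {q : ℕ} (hq : Fintype.card F = q) {E G K : Submodule F V}
    (k : ℕ) (hEG : E ≤ G) (hk : finrank F G = finrank F E + (k + 1)) (hEK : E ⊓ K = ⊥)
    (hGK : finrank F (G ⊓ K : Submodule F V) = k) :
    (({U : Submodule F V | E ≤ U ∧ U ≤ G ∧ finrank F U = finrank F E + 1 ∧ U ⊓ K = ⊥}.ncard : ℕ)
      : ℝ) = (q : ℝ) ^ k := by
  have hq1 : 1 < q := hq ▸ Fintype.one_lt_card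
  have hq1' : (1:ℝ) < q := by exact_mod_cast hq1
  have : Finite V := Module.finite_of_finite F
  set H := E ⊔ (G ⊓ K) with hH
  have hHG : H ≤ G := sup_le hEG inf_le_left
  have hHr : finrank F H = finrank F E + k := by
    have h := Submodule.finrank_sup_add_finrank_inf_eq E (G ⊓ K)
    have : E ⊓ (G ⊓ K) = ⊥ := by
      rw [eq_bot_iff, ← hEK]; exact inf_le_inf_left _ inf_le_right
    rw [this, hGK] at h
    simpa using h
  have c1 := count_covers hq (k+1) hEG hk
  have c2 := count_covers hq k (le_sup_left : E ≤ H) hHr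
  have hsplit : {U : Submodule F V | E ≤ U ∧ U ≤ G ∧ finrank F U = finrank F E + 1} =
      {U : Submodule F V | E ≤ U ∧ U ≤ G ∧ finrank F U = finrank F E + 1 ∧ U ⊓ K = ⊥} ∪
      {U : Submodule F V | E ≤ U ∧ U ≤ H ∧ finrank F U = finrank F E + 1} := by
    ext U
    simp only [Set.mem_ofPred_eq, Set.mem_union]
    constructor
    · rintro ⟨h1, h2, h3⟩
      by_cases hUK : U ⊓ K = ⊥
      · exact Or.inl ⟨h1, h2, h3, hUK⟩
      · right
        refine ⟨h1, ?_, h3⟩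
        obtain ⟨y, ⟨hyU, hyK⟩, hy0⟩ := Submodule.exists_mem_ne_zero_of_ne_bot hUK
        have hyE : y ∉ E := by
          intro hy
          have : y ∈ E ⊓ K := ⟨hy, hyK⟩
          rw [hEK] at this
          exact hy0 this
        rw [← eq_sup_span h1 h3 hyU hyE]
        refine sup_le le_sup_left ?_
        rw [Submodule.span_singleton_le_iff_mem]
        exact (le_sup_right : G ⊓ K ≤ H) ⟨h2 hyU, hyK⟩
    · rintro (⟨h1, h2, h3, _⟩ | ⟨h1, h2, h3⟩)
      · exact ⟨h1, h2, h3⟩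
      · exact ⟨h1, h2.trans hHG, h3⟩
  have hdisj : Disjoint
      {U : Submodule F V | E ≤ U ∧ U ≤ G ∧ finrank F U = finrank F E + 1 ∧ U ⊓ K = ⊥}
      {U : Submodule F V | E ≤ U ∧ U ≤ H ∧ finrank F U = finrank F E + 1} := by
    rw [Set.disjoint_left]
    rintro U ⟨h1, _, h3, h4⟩ ⟨_, h2, _⟩
    have : U = E := by
      calc U = (E ⊔ (G ⊓ K)) ⊓ U := (inf_eq_right.mpr h2).symm
        _ = E ⊔ ((G ⊓ K) ⊓ U) := sup_inf_assoc_of_le _ h1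
        _ = E ⊔ ⊥ := by
          congr 1
          rw [eq_bot_iff, ← h4]
          exact le_inf inf_le_right (inf_le_left.trans inf_le_right)
        _ = E := sup_bot_eq E
    rw [this] at h3
    omega
  rw [hsplit, Set.ncard_union_eq hdisj (Set.toFinite _) (Set.toFinite _)] at c1
  push_cast at c1
  rw [c2] at c1
  have hne : (q:ℝ) - 1 ≠ 0 := by linarith
  field_simp at c1
  have : (({U : Submodule F V | E ≤ U ∧ U ≤ G ∧ finrank F U = finrank F E + 1 ∧ U ⊓ K = ⊥}.ncard
    : ℕ) : ℝ) * ((q:ℝ) - 1) = (q:ℝ)^k * ((q:ℝ)-1) := by rw [pow_succ] at c1; linarith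
  exact mul_right_cancel₀ hne this

end LinAlg

section Chambers

variable {F V : Type} [Field F] [AddCommGroup V] [Module F V]

/-- Chambers. -/
abbrev Cham (B : V →ₗ[F] V →ₗ[F] F) (n : ℕ) := SFlag B (Finset.Icc 1 n)

variable {B : V →ₗ[F] V →ₗ[F] F} {n : ℕ}

lemma Cham.zero (C : Cham B n) : C.space 0 = ⊥ := C.eq_bot 0 (by simp)

lemma Cham.rank (C : Cham B n) {i : ℕ} (hi : i ≤ n) : finrank F (C.space i) = i := by
  rcases Nat.eq_zero_or_pos i with rfl | h
  · rw [C.zero]; simp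
  · exact C.finrank_eq i (Finset.mem_Icc.mpr ⟨h, hi⟩)

lemma Cham.iso (C : Cham B n) {i : ℕ} (hi : i ≤ n) : IsTotIso B (C.space i) := by
  rcases Nat.eq_zero_or_pos i with rfl | h
  · rw [C.zero]; intro u hu w hw; rw [Submodule.mem_bot] at hu; simp [hu]
  · exact C.isotropic i (Finset.mem_Icc.mpr ⟨h, hi⟩)

lemma Cham.le (C : Cham B n) {i j : ℕ} (hij : i ≤ j) (hj : j ≤ n) : C.space i ≤ C.space j := by
  rcases Nat.eq_zero_or_pos i with rfl | h
  · rw [C.zero]; exact bot_le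
  · exact C.mono i (Finset.mem_Icc.mpr ⟨h, hij.trans hj⟩) j
      (Finset.mem_Icc.mpr ⟨h.trans_le hij, hj⟩) hij

lemma Cham.ext' {C D : Cham B n} (h : ∀ i, 1 ≤ i → i ≤ n → C.space i = D.space i) : C = D := by
  have : C.space = D.space := by
    funext i
    by_cases hi : i ∈ Finset.Icc 1 n
    · rw [Finset.mem_Icc] at hi; exact h i hi.1 hi.2
    · rw [C.eq_bot i hi, D.eq_bot i hi]
  cases C; cases D; simp only at this; subst this; rfl

/-- build a chamber from a function -/
def Cham.mk' (g : ℕ → Submodule F V) (h1 : ∀ i, 1 ≤ i → i ≤ n → IsTotIso B (g i))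
    (h2 : ∀ i, 1 ≤ i → i ≤ n → finrank F (g i) = i)
    (h3 : ∀ i j, 1 ≤ i → i ≤ j → j ≤ n → g i ≤ g j) : Cham B n where
  space i := if i ∈ Finset.Icc 1 n then g i else ⊥
  isotropic i hi := by
    rw [if_pos hi]; rw [Finset.mem_Icc] at hi; exact h1 i hi.1 hi.2
  finrank_eq i hi := by
    rw [if_pos hi]; rw [Finset.mem_Icc] at hi; exact h2 i hi.1 hi.2
  mono i hi j hj hij := by
    rw [if_pos hi, if_pos hj]; rw [Finset.mem_Icc] at hi hj; exact h3 i j hi.1 hij hj.2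
  eq_bot i hi := by rw [if_neg hi]

lemma Cham.mk'_space (g : ℕ → Submodule F V) (h1 : ∀ i, 1 ≤ i → i ≤ n → IsTotIso B (g i))
    (h2 : ∀ i, 1 ≤ i → i ≤ n → finrank F (g i) = i)
    (h3 : ∀ i j, 1 ≤ i → i ≤ j → j ≤ n → g i ≤ g j) {i : ℕ} (hi : 1 ≤ i) (hi' : i ≤ n) :
    (Cham.mk' (B := B) g h1 h2 h3).space i = g i := by
  simp only [Cham.mk']
  rw [if_pos (Finset.mem_Icc.mpr ⟨hi, hi'⟩)]

lemma Cham.finite [Finite V] : Finite (Cham B n) := by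
  apply Finite.of_injective
    (fun (C : Cham B n) (i : Fin (n+1)) => C.space i)
  intro C D h
  apply Cham.ext'
  intro i _ hi
  exact congrFun h ⟨i, by omega⟩

variable [FiniteDimensional F V]

lemma iso_of_cover (halt : IsAltForm B) {E U : Submodule F V} (hE : IsTotIso B E) (hEU : E ≤ U)
    (hU : U ≤ bperp B E) (hr : finrank F U = finrank F E + 1) : IsTotIso B U := by
  have hlt : E < U := by
    apply lt_of_le_of_ne hEU
    rintro rfl; omega
  obtain ⟨x, hxU, hxE⟩ := SetLike.exists_of_lt hlt
  have hx := eq_sup_span hEU hr hxU hxE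
  rw [iso_le]
  conv_rhs => rw [← hx]
  rw [bperp_sup]
  refine le_inf hU ?_
  rw [← hx]
  refine sup_le ?_ ?_
  · rw [le_bperp_comm halt, Submodule.span_singleton_le_iff_mem]
    exact hU hxU
  · rw [Submodule.span_singleton_le_iff_mem, mem_bperp]
    intro w hw
    obtain ⟨c, rfl⟩ := Submodule.mem_span_singleton.mp hw
    simp [halt x]

lemma count_prefix [Finite F] (halt : IsAltForm B) (s : ℕ) (hs : s ≤ n) (S : Submodule F V)
    (hSiso : IsTotIso B S)
    (hSr : finrank F S = s) (p : ℕ → Submodule F V → Prop) (f : ℕ → ℝ)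
    (hstep : ∀ r < n, ∀ E : Submodule F V, finrank F E = r → IsTotIso B E → (r ≤ s → E ≤ S) →
      (s ≤ r → S ≤ E) → (1 ≤ r → p r E) →
      (({U : Submodule F V | E ≤ U ∧ U ≤ (if r < s then S else bperp B E) ∧
        finrank F U = finrank F E + 1 ∧ p (r+1) U}.ncard : ℕ) : ℝ) = f r) :
    (({C : Cham B n | C.space s = S ∧ ∀ i, 1 ≤ i → i ≤ n → p i (C.space i)}.ncard : ℕ) : ℝ) =
      ∏ r ∈ Finset.range n, f r := by
  have : Finite V := Module.finite_of_finite F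
  have : Finite (Cham B n) := Cham.finite
  have : Fintype (Cham B n) := Fintype.ofFinite _
  have : Fintype (Submodule F V) := Fintype.ofFinite _
  have key : ∀ k r, r + k = n → ∀ g : ℕ → Submodule F V,
      (∀ i ≤ r, finrank F (g i) = i ∧ IsTotIso B (g i) ∧ (i ≤ s → g i ≤ S) ∧ (s ≤ i → S ≤ g i) ∧
        (1 ≤ i → p i (g i))) → (∀ i j, i ≤ j → j ≤ r → g i ≤ g j) →
      (({C : Cham B n | (∀ i ≤ r, C.space i = g i) ∧ C.space s = S ∧
        ∀ i, 1 ≤ i → i ≤ n → p i (C.space i)}.ncard : ℕ) : ℝ) =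
        ∏ i ∈ Finset.range k, f (r + i) := by
    intro k
    induction k with
    | zero =>
      intro r hr g hg hmono
      have hr : r = n := by omega
      subst hr
      have h2 : ∀ i, 1 ≤ i → i ≤ r → finrank F (g i) = i := fun i _ h => (hg i h).1
      have h1 : ∀ i, 1 ≤ i → i ≤ r → IsTotIso B (g i) := fun i _ h => (hg i h).2.1
      have h3 : ∀ i j, 1 ≤ i → i ≤ j → j ≤ r → g i ≤ g j := fun i j _ => hmono i j
      have hg0 : g 0 = ⊥ := by
        have := (hg 0 (by omega)).1
        exact Submodule.finrank_eq_zero.mp this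
      have hall : ∀ i ≤ r, (Cham.mk' (B := B) g h1 h2 h3).space i = g i := by
        intro i hi
        rcases Nat.eq_zero_or_pos i with rfl | h
        · rw [Cham.zero, hg0]
        · exact Cham.mk'_space g h1 h2 h3 h hi
      have : {C : Cham B r | (∀ i ≤ r, C.space i = g i) ∧ C.space s = S ∧
        ∀ i, 1 ≤ i → i ≤ r → p i (C.space i)} = {Cham.mk' (B := B) g h1 h2 h3} := by
        ext C
        simp only [Set.mem_ofPred_eq, Set.mem_singleton_iff]
        constructor
        · rintro ⟨h, -, -⟩
          apply Cham.ext'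
          intro i _ hi
          rw [h i hi, hall i hi]
        · rintro rfl
          refine ⟨hall, ?_, ?_⟩
          · rw [hall s hs]
            exact le_antisymm ((hg s hs).2.2.1 le_rfl) ((hg s hs).2.2.2.1 le_rfl)
          · intro i hi hi'
            rw [hall i hi']
            exact (hg i hi').2.2.2.2 hi
      rw [this]; simp
    | succ k ih =>
      intro r hr g hg hmono
      obtain ⟨e1, e2, e3, e4, e5⟩ := hg r le_rfl
      set 𝒰 := {U : Submodule F V | g r ≤ U ∧ U ≤ (if r < s then S else bperp B (g r)) ∧
        finrank F U = finrank F (g r) + 1 ∧ p (r+1) U} with h𝒰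
      have hU := hstep r (by omega) (g r) e1 e2 e3 e4 e5
      rw [← h𝒰] at hU
      set A := {C : Cham B n | (∀ i ≤ r, C.space i = g i) ∧ C.space s = S ∧
        ∀ i, 1 ≤ i → i ≤ n → p i (C.space i)} with hA
      have hfw := Finset.card_eq_sum_card_fiberwise (f := fun C : Cham B n => C.space (r+1))
        (s := A.toFinset) (t := 𝒰.toFinset) (by
          intro C hC
          simp only [Set.coe_toFinset] at hC ⊢
          obtain ⟨hC1, hC2, hC3⟩ := hC
          refine ⟨?_, ?_, ?_, hC3 (r+1) (by omega) (by omega)⟩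
          · rw [← hC1 r le_rfl]; exact C.le (by omega) (by omega)
          · split_ifs with h
            · rw [← hC2]; exact C.le (by omega) hs
            · rw [← hC1 r le_rfl]
              exact (iso_le.mp (C.iso (by omega))).trans (bperp_anti (C.le (by omega) (by omega)))
          · rw [e1]; exact C.rank (by omega))
      rw [Set.ncard_eq_toFinset_card' A, hfw, Finset.prod_range_succ']
      push_cast
      rw [Finset.sum_congr rfl (g := fun _ => ∏ i ∈ Finset.range k, f (r + 1 + i))]
      · rw [Finset.sum_const, nsmul_eq_mul, ← Set.ncard_eq_toFinset_card' 𝒰, hU, mul_comm]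
        congr 1
        apply Finset.prod_congr rfl
        intro i _
        congr 1
        omega
      · intro U hUm
        rw [Set.mem_toFinset] at hUm
        obtain ⟨u1, u2, u3, u4⟩ := hUm
        have hUiso : IsTotIso B U := by
          split_ifs at u2 with h
          · exact fun x hx y hy => hSiso x (u2 hx) y (u2 hy)
          · exact iso_of_cover halt e2 u1 u2 u3
        rw [← ih (r+1) (by omega) (Function.update g (r+1) U)]
        · rw [Set.ncard_eq_toFinset_card']
          congr 2
          ext C
          simp only [Finset.mem_filter, Set.mem_toFinset, hA, Set.mem_ofPred_eq]
          constructor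
          · rintro ⟨⟨a1, a2, a3⟩, a4⟩
            refine ⟨?_, a2, a3⟩
            intro i hi
            rcases Nat.lt_or_ge i (r+1) with h | h
            · rw [Function.update_of_ne (by omega)]; exact a1 i (by omega)
            · have : i = r + 1 := by omega
              subst this
              rw [Function.update_self]; exact a4
          · rintro ⟨a1, a2, a3⟩
            refine ⟨⟨?_, a2, a3⟩, ?_⟩
            · intro i hi
              have := a1 i (by omega)
              rwa [Function.update_of_ne (by omega)] at this
            · have := a1 (r+1) le_rfl
              rwa [Function.update_self] at this
        · intro i hi
          rcases Nat.lt_or_ge i (r+1) with h | h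
          · rw [Function.update_of_ne (by omega)]; exact hg i (by omega)
          · have : i = r + 1 := by omega
            subst this
            rw [Function.update_self]
            refine ⟨by rw [u3, e1], hUiso, ?_, ?_, fun _ => u4⟩
            · intro h; rwa [if_pos (by omega)] at u2
            · intro h
              by_cases h' : r < s
              · rw [if_pos h'] at u2
                have : U = S := Submodule.eq_of_le_of_finrank_eq u2 (by omega)
                exact this.ge
              · exact (e4 (by omega)).trans u1
        · intro i j hij hj
          rcases Nat.lt_or_ge j (r+1) with h | h
          · rw [Function.update_of_ne (by omega), Function.update_of_ne (by omega)]
            exact hmono i j hij (by omega)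
          · have : j = r + 1 := by omega
            subst this
            rw [Function.update_self]
            rcases Nat.lt_or_ge i (r+1) with h | h
            · rw [Function.update_of_ne (by omega)]
              exact (hmono i r (by omega) le_rfl).trans u1
            · have : i = r + 1 := by omega
              subst this
              rw [Function.update_self]
  have := key n 0 (by omega) (fun _ => ⊥) (by
    intro i hi
    have : i = 0 := by omega
    subst this
    refine ⟨by simp, ?_, fun _ => bot_le, ?_, fun h => by omega⟩
    · intro u hu w hw; rw [Submodule.mem_bot] at hu; simp [hu]
    · intro h
      have : s = 0 := by omega
      rw [this] at hSr
      rw [Submodule.finrank_eq_zero.mp hSr]) (by intros; exact le_rfl)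
  simp only [zero_add] at this
  rw [← this]
  congr 2
  ext C
  simp only [Set.mem_ofPred_eq]
  constructor
  · rintro ⟨h1, h2⟩
    refine ⟨?_, h1, h2⟩
    intro i hi
    have : i = 0 := by omega
    rw [this, C.zero]
  · rintro ⟨_, h1, h2⟩; exact ⟨h1, h2⟩

/-- number of chambers on `S` -/
lemma count_on [Fintype F] {q : ℕ} (hq : Fintype.card F = q) (halt : IsAltForm B)
    (hnd : NondegForm B) (hdim : finrank F V = 2 * n) (s : ℕ) (hs : s ≤ n) (S : Submodule F V)
    (hSiso : IsTotIso B S) (hSr : finrank F S = s) :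
    (({C : Cham B n | C.space s = S}.ncard : ℕ) : ℝ) =
      ∏ r ∈ Finset.range n, ((q:ℝ) ^ (if r < s then s - r else 2 * (n - r)) - 1) / ((q:ℝ) - 1) := by
  have := count_prefix halt s hs S hSiso hSr (fun _ _ => True) 
    (fun r => ((q:ℝ) ^ (if r < s then s - r else 2 * (n - r)) - 1) / ((q:ℝ) - 1)) (by
      intro r hr E hE hEi h1 h2 _
      simp only [and_true]
      split_ifs with h
      · exact count_covers hq _ (h1 h.le) (by omega)
      · have := finrank_bperp halt hnd E
        exact count_covers hq _ (iso_le.mp hEi) (by omega))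
  rw [← this]
  simp

/-- number of chambers on `S` opposite to a given chamber -/
lemma count_opp [Fintype F] {q : ℕ} (hq : Fintype.card F = q) (halt : IsAltForm B)
    (hnd : NondegForm B) (hdim : finrank F V = 2 * n) (s : ℕ) (hs : s ≤ n) (S : Submodule F V)
    (hSiso : IsTotIso B S) (hSr : finrank F S = s) (C : Cham B n)
    (hC : bperp B (C.space s) ⊓ S = ⊥) :
    (({D : Cham B n | D.space s = S ∧ FlagOpp C D}.ncard : ℕ) : ℝ) =
      ∏ r ∈ Finset.range n, (q:ℝ) ^ (if r < s then s - r - 1 else 2 * (n - r) - 1) := by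
  have := count_prefix halt s hs S hSiso hSr (fun i U => U ⊓ bperp B (C.space i) = ⊥) 
    (fun r => (q:ℝ) ^ (if r < s then s - r - 1 else 2 * (n - r) - 1)) (by
      intro r hr E hE hEi h1 h2 h3
      have hE0 : E ⊓ bperp B (C.space (r+1)) = ⊥ := by
        rcases Nat.eq_zero_or_pos r with h | h
        · subst h
          rw [Submodule.finrank_eq_zero.mp hE]; simp
        · rw [eq_bot_iff, ← h3 h]
          exact inf_le_inf_left _ (bperp_anti (C.le (by omega) (by omega)))
      have hCr := C.rank (i := r+1) (by omega)
      split_ifs with h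
      · refine count_covers_avoid hq _ (h1 h.le) (by omega) hE0 ?_
        have h4 := finrank_swap halt hnd (C.space (r+1)) S
        have h5 := finrank_swap halt hnd (C.space s) S
        rw [hC, finrank_bot, C.rank hs] at h5
        have h6 : bperp B S ⊓ C.space s = ⊥ := by
          rw [← Submodule.finrank_eq_zero (R := F)]; omega
        have h7 : bperp B S ⊓ C.space (r+1) = ⊥ := by
          rw [eq_bot_iff, ← h6]
          exact inf_le_inf_left _ (C.le (by omega) hs)
        rw [h7, finrank_bot] at h4
        rw [inf_comm]
        omega
      · have hb := finrank_bperp halt hnd E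
        refine count_covers_avoid hq _ (iso_le.mp hEi) (by omega) hE0 ?_
        have h4 := finrank_swap halt hnd (C.space (r+1)) (bperp B E)
        rw [bperp_bperp halt hnd] at h4
        have h5 := finrank_swap halt hnd (C.space (r+1)) E
        rw [inf_comm _ E, hE0, finrank_bot] at h5
        have h6 := Submodule.finrank_sup_add_finrank_inf_eq E (C.space (r+1))
        have h7 := finrank_bperp halt hnd (E ⊔ C.space (r+1))
        rw [bperp_sup] at h7
        have h8 : E ⊓ C.space (r+1) = ⊥ := by
          rw [eq_bot_iff, ← hE0]
          exact inf_le_inf_left _ (iso_le.mp (C.iso (by omega)))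
        rw [h8, finrank_bot] at h6
        omega)
  rw [← this]
  congr 2
  ext D
  simp only [Set.mem_ofPred_eq, FlagOpp, Finset.mem_Icc]
  refine and_congr_right fun _ => ?_
  constructor
  · intro h i hi hi'; rw [inf_comm]; exact h i ⟨hi, hi'⟩
  · intro h i hi; rw [inf_comm]; exact h i hi.1 hi.2

end Chambers

section Panels

variable {F V : Type} [Field F] [AddCommGroup V] [Module F V]
variable {B : V →ₗ[F] V →ₗ[F] F} {n : ℕ}

/-- `j`-adjacency (including equality). -/
def Adj (j : ℕ) (C D : Cham B n) : Prop := ∀ i, i ≠ j → C.space i = D.space i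

lemma Adj.symm {j : ℕ} {C D : Cham B n} (h : Adj j C D) : Adj j D C := fun i hi => (h i hi).symm
lemma Adj.refl {j : ℕ} (C : Cham B n) : Adj j C C := fun _ _ => rfl
lemma Adj.trans {j : ℕ} {C D E : Cham B n} (h : Adj j C D) (h' : Adj j D E) : Adj j C E :=
  fun i hi => (h i hi).trans (h' i hi)

lemma Adj.eq {j : ℕ} {C D : Cham B n} (h : Adj j C D) (h' : C.space j = D.space j) : C = D := by
  apply Cham.ext'
  intro i _ _
  by_cases hi : i = j
  · rw [hi, h']
  · exact h i hi

/-- upper bound of the panel -/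
noncomputable def upper (j : ℕ) (C : Cham B n) : Submodule F V :=
  if j < n then C.space (j+1) else bperp B (C.space (j-1))

lemma upper_adj {j : ℕ} (hj : 1 ≤ j) {C D : Cham B n} (h : Adj j C D) :
    upper j C = upper j D := by
  unfold upper
  rw [h (j+1) (by omega), h (j-1) (by omega)]

lemma le_upper {j : ℕ} (hjn : j ≤ n) (C : Cham B n) : C.space j ≤ upper j C := by
  unfold upper
  split_ifs with h
  · exact C.le (by omega) (by omega)
  · exact (iso_le.mp (C.iso hjn)).trans (bperp_anti (C.le (by omega) hjn))

variable [FiniteDimensional F V]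

lemma rank_upper (halt : IsAltForm B)
    (hnd : NondegForm B) (hdim : finrank F V = 2 * n) {j : ℕ} (hj : 1 ≤ j) (hjn : j ≤ n)
    (C : Cham B n) : finrank F (upper j C) = j + 1 := by
  by_cases h : j < n
  · rw [show upper j C = C.space (j+1) from if_pos h]
    exact C.rank (by omega)
  · rw [show upper j C = bperp B (C.space (j-1)) from if_neg h]
    have := finrank_bperp halt hnd (C.space (j-1))
    rw [C.rank (by omega)] at this
    omega

lemma exists_repl (halt : IsAltForm B) {j : ℕ} (hj : 1 ≤ j) (hjn : j ≤ n) (C : Cham B n)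
    (U : Submodule F V) (h1 : C.space (j-1) ≤ U) (h2 : U ≤ upper j C) (h3 : finrank F U = j) :
    ∃ D : Cham B n, Adj j D C ∧ D.space j = U := by
  have hr : finrank F U = finrank F (C.space (j-1)) + 1 := by
    rw [C.rank (by omega)]; omega
  have hUiso : IsTotIso B U := by
    unfold upper at h2
    split_ifs at h2 with h
    · exact fun x hx y hy => C.iso (i := j+1) (by omega) x (h2 hx) y (h2 hy)
    · exact iso_of_cover halt (C.iso (by omega)) h1 h2 hr
  have hup : ∀ k, j < k → k ≤ n → U ≤ C.space k := by
    intro k hk hk'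
    unfold upper at h2
    rw [if_pos (by omega)] at h2
    exact h2.trans (C.le (by omega) hk')
  have g1 : ∀ i, 1 ≤ i → i ≤ n → IsTotIso B (Function.update C.space j U i) := by
    intro i _ hi
    by_cases h : i = j
    · subst h; rw [Function.update_self]; exact hUiso
    · rw [Function.update_of_ne h]; exact C.iso hi
  have g2 : ∀ i, 1 ≤ i → i ≤ n → finrank F (Function.update C.space j U i) = i := by
    intro i _ hi
    by_cases h : i = j
    · subst h; rw [Function.update_self]; exact h3
    · rw [Function.update_of_ne h]; exact C.rank hi
  have g3 : ∀ i k, 1 ≤ i → i ≤ k → k ≤ n →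
      Function.update C.space j U i ≤ Function.update C.space j U k := by
    intro i k _ hik hk
    by_cases h : i = j
    · subst h
      rw [Function.update_self]
      by_cases h' : k = i
      · subst h'; rw [Function.update_self]
      · rw [Function.update_of_ne h']; exact hup k (by omega) hk
    · rw [Function.update_of_ne h]
      by_cases h' : k = j
      · subst h'; rw [Function.update_self]
        exact (C.le (by omega) (by omega)).trans h1
      · rw [Function.update_of_ne h']; exact C.le hik hk
  refine ⟨Cham.mk' (Function.update C.space j U) g1 g2 g3, ?_, ?_⟩
  · intro i hi
    by_cases h : 1 ≤ i ∧ i ≤ n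
    · rw [Cham.mk'_space _ g1 g2 g3 h.1 h.2, Function.update_of_ne hi]
    · have : i ∉ Finset.Icc 1 n := by rw [Finset.mem_Icc]; exact h
      rw [SFlag.eq_bot _ i this, SFlag.eq_bot _ i this]
  · rw [Cham.mk'_space _ g1 g2 g3 hj hjn, Function.update_self]

lemma panel_count [Fintype F] {q : ℕ} (hq : Fintype.card F = q) (halt : IsAltForm B)
    (hnd : NondegForm B) (hdim : finrank F V = 2 * n) {j : ℕ} (hj : 1 ≤ j) (hjn : j ≤ n)
    (C : Cham B n) : (({D : Cham B n | Adj j D C}.ncard : ℕ) : ℝ) = (q:ℝ) + 1 := by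
  have hq1 : 1 < q := hq ▸ Fintype.one_lt_card
  have hq1' : (1:ℝ) < q := by exact_mod_cast hq1
  have hr1 := C.rank (i := j-1) (by omega)
  have h := count_covers hq 2 ((C.le (i := j-1) (by omega) hjn).trans (le_upper hjn C))
    (by rw [rank_upper halt hnd hdim hj hjn, hr1]; omega)
  have himg : {U : Submodule F V | C.space (j-1) ≤ U ∧ U ≤ upper j C ∧
      finrank F U = finrank F (C.space (j-1)) + 1} =
      (fun D : Cham B n => D.space j) '' {D : Cham B n | Adj j D C} := by
    ext U
    simp only [Set.mem_ofPred_eq, Set.mem_image]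
    constructor
    · rintro ⟨h1, h2, h3⟩
      exact exists_repl halt hj hjn C U h1 h2 (by omega)
    · rintro ⟨D, hD, rfl⟩
      refine ⟨?_, ?_, ?_⟩
      · rw [← hD (j-1) (by omega)]; exact D.le (by omega) hjn
      · rw [← upper_adj hj hD]; exact le_upper hjn D
      · rw [D.rank hjn]; omega
  rw [himg, Set.InjOn.ncard_image] at h
  · rw [h]
    field_simp [show (q:ℝ) - 1 ≠ 0 by linarith]
    ring
  · intro D hD D' hD' he
    exact (Adj.trans hD (Adj.symm hD')).eq he

end Panels

section Mats

variable {F V : Type} [Field F] [AddCommGroup V] [Module F V]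
variable {B : V →ₗ[F] V →ₗ[F] F} {n : ℕ}

/-- 0-1 matrix of a relation -/
noncomputable def relM {α : Type*} (R : α → α → Prop) : Matrix α α ℝ :=
  Matrix.of fun a b => if R a b then 1 else 0

lemma relM_apply {α : Type*} (R : α → α → Prop) (a b : α) :
    relM R a b = if R a b then 1 else 0 := rfl

/-- adjacency operator -/
noncomputable def TM (B : V →ₗ[F] V →ₗ[F] F) (n j : ℕ) : Matrix (Cham B n) (Cham B n) ℝ :=
  relM (Adj j) - 1

variable [FiniteDimensional F V] [Fintype F] [Fintype (Cham B n)]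

lemma panel_sum {q : ℕ} (hq : Fintype.card F = q) (halt : IsAltForm B)
    (hnd : NondegForm B) (hdim : finrank F V = 2 * n) {j : ℕ} (hj : 1 ≤ j) (hjn : j ≤ n)
    (C : Cham B n) : ∑ D : Cham B n, (if Adj j D C then (1:ℝ) else 0) = (q:ℝ) + 1 := by
  rw [← panel_count hq halt hnd hdim hj hjn C, Finset.sum_boole, Set.ncard_eq_toFinset_card']
  congr 2
  ext D
  simp

lemma J_sq {q : ℕ} (hq : Fintype.card F = q) (halt : IsAltForm B)
    (hnd : NondegForm B) (hdim : finrank F V = 2 * n) {j : ℕ} (hj : 1 ≤ j) (hjn : j ≤ n) :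
    relM (Adj (B := B) (n := n) j) * relM (Adj j) = ((q:ℝ)+1) • relM (Adj j) := by
  ext C D
  rw [Matrix.mul_apply, Matrix.smul_apply]
  simp only [relM_apply, smul_eq_mul]
  by_cases h : Adj j C D
  · rw [if_pos h, mul_one, ← panel_sum hq halt hnd hdim hj hjn D]
    apply Finset.sum_congr rfl
    intro D' _
    by_cases h' : Adj j D' D
    · rw [if_pos h', if_pos (h.trans h'.symm), mul_one]
    · rw [if_neg h', mul_zero]
  · rw [if_neg h, mul_zero]
    apply Finset.sum_eq_zero
    intro D' _
    by_cases h' : Adj j D' D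
    · rw [if_pos h', if_neg (fun h'' => h (h''.trans h')), zero_mul]
    · rw [if_neg h', mul_zero]

lemma TM_sq {q : ℕ} (hq : Fintype.card F = q) (halt : IsAltForm B)
    (hnd : NondegForm B) (hdim : finrank F V = 2 * n) {j : ℕ} (hj : 1 ≤ j) (hjn : j ≤ n) :
    TM B n j * TM B n j = ((q:ℝ) - 1) • TM B n j + (q:ℝ) • (1 : Matrix (Cham B n) (Cham B n) ℝ) := by
  unfold TM
  rw [sub_mul, mul_sub, mul_sub, J_sq hq halt hnd hdim hj hjn]
  simp only [mul_one, one_mul]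
  module

lemma J_far (halt : IsAltForm B) {i j : ℕ} (hi : 1 ≤ i) (hin : i ≤ n) (h : i + 2 ≤ j ∨ j + 2 ≤ i)
    (C D : Cham B n) :
    ((relM (Adj (B := B) (n := n) i) * relM (Adj j) : Matrix (Cham B n) (Cham B n) ℝ)) C D =
      if (∀ k, k ≠ i → k ≠ j → C.space k = D.space k) then 1 else 0 := by
  rw [Matrix.mul_apply]
  simp only [relM_apply]
  split_ifs with hk
  · obtain ⟨X, hX1, hX2⟩ := exists_repl halt hi hin C (D.space i)
      (by rw [hk (i-1) (by omega) (by omega)]; exact D.le (by omega) hin)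
      (by
        have : upper i C = upper i D := by
          unfold upper
          rw [hk (i-1) (by omega) (by omega), hk (i+1) (by omega) (by omega)]
        rw [this]; exact le_upper hin D)
      (D.rank hin)
    have hXD : Adj j X D := by
      intro k hkj
      by_cases hki : k = i
      · rw [hki, hX2]
      · rw [hX1 k hki, hk k hki hkj]
    rw [Finset.sum_eq_single X]
    · rw [if_pos hX1.symm, if_pos hXD, mul_one]
    · intro Y _ hY
      by_cases h1 : Adj i C Y
      · by_cases h2 : Adj j Y D
        · exfalso
          apply hY
          apply (Adj.trans h1.symm hX1.symm).eq
          rw [h2 i (by omega), hX2]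
        · rw [if_neg h2, mul_zero]
      · rw [if_neg h1, zero_mul]
    · intro h; exact absurd (Finset.mem_univ _) h
  · apply Finset.sum_eq_zero
    intro Y _
    by_cases h1 : Adj i C Y
    · by_cases h2 : Adj j Y D
      · exact absurd (fun k hki hkj => (h1 k hki).trans (h2 k hkj)) hk
      · rw [if_neg h2, mul_zero]
    · rw [if_neg h1, zero_mul]

lemma TM_far (halt : IsAltForm B) {i j : ℕ} (hi : 1 ≤ i) (hjn : j ≤ n) (h : i + 2 ≤ j) :
    Commute (TM B n i) (TM B n j) := by
  have : Commute (relM (Adj (B := B) (n := n) i)) (relM (Adj j)) := by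
    unfold Commute SemiconjBy
    ext C D
    rw [J_far halt hi (by omega) (Or.inl h), J_far halt (by omega) hjn (Or.inr h)]
    congr 1
    apply propext
    constructor
    · intro h k h1 h2; exact h k h2 h1
    · intro h k h1 h2; exact h k h2 h1
  unfold TM
  exact (this.sub_left (Commute.one_left _)).sub_right (Commute.one_right _)

lemma TM_transpose (j : ℕ) : (TM B n j).transpose = TM B n j := by
  unfold TM
  rw [Matrix.transpose_sub, Matrix.transpose_one]
  congr 1
  ext C D
  simp only [Matrix.transpose_apply, relM_apply]
  congr 1
  exact propext ⟨Adj.symm, Adj.symm⟩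

/-- the generic multiplication step -/
lemma rel_mul_TM {j : ℕ} (R S K : Cham B n → Cham B n → Prop)
    (hK : ∀ C D D', Adj j D D' → K C D → K C D') (hRK : ∀ C D, R C D → K C D)
    (hex : ∀ C D, K C D → ∃ D', Adj j D' D ∧ ∀ D'', Adj j D'' D → (R C D'' ↔ D'' = D'))
    (hS : ∀ C D, S C D ↔ (K C D ∧ ¬ R C D)) :
    relM R * TM B n j = relM S := by
  ext C D
  unfold TM
  rw [mul_sub, mul_one, Matrix.sub_apply, Matrix.mul_apply]
  simp only [relM_apply]
  have hsum : ∑ D' : Cham B n, (if R C D' then (1:ℝ) else 0) * (if Adj j D' D then 1 else 0) =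
      if K C D then 1 else 0 := by
    by_cases hk : K C D
    · rw [if_pos hk]
      obtain ⟨D', h1, h2⟩ := hex C D hk
      rw [Finset.sum_eq_single D']
      · rw [if_pos h1, if_pos ((h2 D' h1).mpr rfl), mul_one]
      · intro D'' _ hne
        by_cases ha : Adj j D'' D
        · rw [if_neg (fun h => hne ((h2 D'' ha).mp h)), zero_mul]
        · rw [if_neg ha, mul_zero]
      · intro h; exact absurd (Finset.mem_univ _) h
    · rw [if_neg hk]
      apply Finset.sum_eq_zero
      intro D' _
      by_cases ha : Adj j D' D
      · rw [if_neg (fun h => hk (hK C D' D ha (hRK C D' h))), zero_mul]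
      · rw [if_neg ha, mul_zero]
  rw [hsum]
  by_cases hk : K C D
  · by_cases hr : R C D
    · rw [if_pos hk, if_pos hr, if_neg (by rw [hS]; tauto)]; ring
    · rw [if_pos hk, if_neg hr, if_pos (by rw [hS]; tauto)]; ring
  · rw [if_neg hk, if_neg (fun h => hk (hRK _ _ h)), if_neg (by rw [hS]; tauto)]; ring

end Mats

section Geo

variable {F V : Type} [Field F] [AddCommGroup V] [Module F V]

lemma LA1 [FiniteDimensional F V] {Cm Ca E G P Pp : Submodule F V} (h1 : Cm ≤ E) (h2 : Cm ≤ Ca)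
    (h3 : Ca ≤ Pp) (h4 : Pp ≤ P) (h5 : E ≤ G) (h6 : P ⊓ E = Cm) (h7 : Ca ≤ G)
    (h8 : Pp ⊓ G ≤ E ⊔ Ca) (h9 : finrank F Ca = finrank F Cm + 1) :
    E ≤ E ⊔ Ca ∧ E ⊔ Ca ≤ G ∧ finrank F (E ⊔ Ca : Submodule F V) = finrank F E + 1 ∧
    ∀ U, E ≤ U → U ≤ G → finrank F U = finrank F E + 1 →
      (P ⊓ U = Ca ↔ U = E ⊔ Ca) ∧ (Pp ⊓ U = Cm ↔ U ≠ E ⊔ Ca) := by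
  have hinf : E ⊓ Ca = Cm := by
    apply le_antisymm
    · rw [← h6]; exact le_inf (inf_le_right.trans (h3.trans h4)) inf_le_left
    · exact le_inf h1 h2
  have hr : finrank F (E ⊔ Ca : Submodule F V) = finrank F E + 1 := by
    have := Submodule.finrank_sup_add_finrank_inf_eq E Ca
    rw [hinf, h9] at this
    omega
  refine ⟨le_sup_left, sup_le h5 h7, hr, ?_⟩
  intro U hU1 hU2 hU3
  constructor
  · constructor
    · intro h
      symm
      apply Submodule.eq_of_le_of_finrank_eq
      · exact sup_le hU1 (h ▸ inf_le_right)
      · rw [hr, hU3]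
    · rintro rfl
      rw [sup_comm, inf_comm, sup_inf_assoc_of_le _ (h3.trans h4), inf_comm, h6]
      exact sup_eq_left.mpr h2
  · constructor
    · rintro h rfl
      have : Ca ≤ Cm := by rw [← h]; exact le_inf h3 le_sup_right
      have := Submodule.finrank_mono this
      omega
    · intro hne
      have hi := inf_covers hU1 (le_sup_left : E ≤ E ⊔ Ca) hU3 hr hne
      apply le_antisymm
      · have : Pp ⊓ U ≤ E := by
          rw [← hi]
          exact le_inf inf_le_right ((inf_le_inf_left _ hU2).trans h8)
        rw [← h6]
        exact le_inf (inf_le_left.trans h4) this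
      · exact le_inf (h2.trans h3) (h1.trans hU1)

variable {B : V →ₗ[F] V →ₗ[F] F} {n : ℕ}

/-- generalized opposition -/
def relO (m : ℕ) (C D : Cham B n) : Prop :=
  (∀ i ≤ m, D.space i = C.space i) ∧
    ∀ i, m < i → i ≤ n → bperp B (C.space i) ⊓ D.space i = C.space m

def relR1 (m j : ℕ) (C D : Cham B n) : Prop :=
  (∀ i ≤ m, D.space i = C.space i) ∧
    (∀ i, m < i → i ≤ j → bperp B (C.space (i+1)) ⊓ D.space i = C.space m) ∧
    ∀ i, j < i → i ≤ n → bperp B (C.space i) ⊓ D.space i = C.space (m+1)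

def relR2 (m j : ℕ) (C D : Cham B n) : Prop :=
  (∀ i ≤ m, D.space i = C.space i) ∧
    (∀ i, m < i → i < j → bperp B (C.space (i+1)) ⊓ D.space i = C.space m ∧
      D.space i ≤ bperp B (C.space (m+1))) ∧
    ∀ i, j ≤ i → i ≤ n → bperp B (C.space i) ⊓ D.space i = C.space m

lemma Cham.le_bp (C : Cham B n) {i j : ℕ} (hi : i ≤ n) (hj : j ≤ n) :
    C.space i ≤ bperp B (C.space j) :=
  (C.le hi le_rfl).trans ((iso_le.mp (C.iso le_rfl)).trans (bperp_anti (C.le hj le_rfl)))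

lemma relR2_eq (m : ℕ) : relR2 (B := B) (n := n) m (m+1) = relO m := by
  funext C D
  apply propext
  unfold relR2 relO
  constructor
  · rintro ⟨h1, -, h3⟩
    exact ⟨h1, fun i hi => h3 i hi⟩
  · rintro ⟨h1, h3⟩
    exact ⟨h1, fun i hi hi' => by omega, fun i hi => h3 i hi⟩

lemma relR1_eq {m : ℕ} (hm : m < n) [FiniteDimensional F V] :
    relR1 (B := B) (n := n) m m = relO (m+1) := by
  funext C D
  apply propext
  unfold relR1 relO
  constructor
  · rintro ⟨h1, -, h3⟩
    refine ⟨fun i hi => ?_, fun i hi => h3 i (by omega)⟩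
    rcases Nat.lt_or_ge i (m+1) with h | h
    · exact h1 i (by omega)
    · have : i = m+1 := by omega
      subst this
      have := h3 (m+1) (by omega) (by omega)
      symm
      apply Submodule.eq_of_le_of_finrank_eq
      · exact this.symm.le.trans inf_le_right
      · rw [C.rank (by omega), D.rank (by omega)]
  · rintro ⟨h1, h3⟩
    refine ⟨fun i hi => h1 i (by omega), fun i hi hi' => by omega, fun i hi hin => ?_⟩
    rcases Nat.lt_or_ge (m+1) i with h | h
    · exact h3 i h hin
    · have : i = m+1 := by omega
      subst this
      rw [h1 _ le_rfl]
      exact inf_eq_right.mpr (iso_le.mp (C.iso hin))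

lemma relO_n : relO (B := B) (n := n) n = fun C D => C = D := by
  funext C D
  apply propext
  constructor
  · rintro ⟨h, -⟩
    exact Cham.ext' fun i _ hi => (h i hi).symm
  · rintro rfl
    exact ⟨fun _ _ => rfl, fun i hi hi' => by omega⟩

lemma relO_zero (C D : Cham B n) : relO 0 C D ↔ FlagOpp C D := by
  unfold relO FlagOpp
  simp only [Finset.mem_Icc, C.zero]
  constructor
  · rintro ⟨-, h⟩ i ⟨h1, h2⟩; exact h i h1 h2
  · intro h
    refine ⟨fun i hi => ?_, fun i hi hi' => h i ⟨hi, hi'⟩⟩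
    have : i = 0 := by omega
    subst this
    rw [C.zero, D.zero]

variable [FiniteDimensional F V]

lemma rel_sym (halt : IsAltForm B) (hnd : NondegForm B) {m i : ℕ} (hmi : m ≤ i) (hin : i ≤ n)
    {C D : Cham B n} (h0 : D.space m = C.space m)
    (h : bperp B (C.space i) ⊓ D.space i = C.space m) :
    bperp B (D.space i) ⊓ C.space i = C.space m := by
  symm
  apply Submodule.eq_of_le_of_finrank_eq
  · refine le_inf ?_ (C.le hmi hin)
    rw [← h0]; exact D.le_bp (by omega) hin
  · have := finrank_swap halt hnd (C.space i) (D.space i)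
    rw [h, C.rank hin, D.rank hin, C.rank (by omega)] at this
    rw [C.rank (by omega)]
    omega

variable [Fintype F] [Fintype (Cham B n)]

lemma rel_mul_TM' (halt : IsAltForm B) {j : ℕ} (hj : 1 ≤ j) (hjn : j ≤ n)
    (R S K : Cham B n → Cham B n → Prop)
    (r s : Cham B n → Submodule F V → Prop)
    (hK : ∀ C D D', Adj j D D' → K C D → K C D')
    (hR : ∀ C D, R C D ↔ K C D ∧ r C (D.space j))
    (hS : ∀ C D, S C D ↔ K C D ∧ s C (D.space j))
    (hex : ∀ C D, K C D → ∃ D0, D.space (j-1) ≤ D0 ∧ D0 ≤ upper j D ∧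
      finrank F D0 = finrank F (D.space (j-1)) + 1 ∧
      ∀ U, D.space (j-1) ≤ U → U ≤ upper j D → finrank F U = finrank F (D.space (j-1)) + 1 →
        (r C U ↔ U = D0) ∧ (s C U ↔ U ≠ D0)) :
    relM R * TM B n j = relM S := by
  have hbd : ∀ D : Cham B n, D.space (j-1) ≤ D.space j ∧ D.space j ≤ upper j D ∧
      finrank F (D.space j) = finrank F (D.space (j-1)) + 1 := by
    intro D
    refine ⟨D.le (by omega) hjn, le_upper hjn D, ?_⟩
    rw [D.rank hjn, D.rank (by omega)]; omega
  apply rel_mul_TM R S K hK (fun C D h => ((hR C D).mp h).1)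
  · intro C D hk
    obtain ⟨D0, h1, h2, h3, h4⟩ := hex C D hk
    obtain ⟨D', h5, h6⟩ := exists_repl halt hj hjn D D0 h1 h2
      (by rw [h3, D.rank (by omega)]; omega)
    refine ⟨D', h5, fun D'' h7 => ?_⟩
    have hk'' := hK C D D'' h7.symm hk
    rw [hR]
    obtain ⟨b1, b2, b3⟩ := hbd D''
    rw [h7 (j-1) (by omega)] at b1 b3
    rw [upper_adj hj h7] at b2
    constructor
    · rintro ⟨-, hr⟩
      exact (h7.trans h5.symm).eq (by rw [h6]; exact ((h4 _ b1 b2 b3).1).mp hr)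
    · rintro rfl
      exact ⟨hk'', ((h4 _ b1 b2 b3).1).mpr h6⟩
  · intro C D
    rw [hS, hR]
    have : K C D → (s C (D.space j) ↔ ¬ r C (D.space j)) := by
      intro hk
      obtain ⟨D0, h1, h2, h3, h4⟩ := hex C D hk
      obtain ⟨b1, b2, b3⟩ := hbd D
      obtain ⟨i1, i2⟩ := h4 _ b1 b2 b3
      rw [i1, i2]
    tauto

lemma step1 (halt : IsAltForm B) {m j : ℕ} (hmj : m < j) (hjn : j < n) :
    relM (relR1 (B := B) (n := n) m (j-1)) * TM B n j = relM (relR1 m j) := by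
  apply rel_mul_TM' halt (by omega) hjn.le _ _
    (fun C D => (∀ i ≤ m, D.space i = C.space i) ∧
      (∀ i, m < i → i < j → bperp B (C.space (i+1)) ⊓ D.space i = C.space m) ∧
      ∀ i, j < i → i ≤ n → bperp B (C.space i) ⊓ D.space i = C.space (m+1))
    (fun C U => bperp B (C.space j) ⊓ U = C.space (m+1))
    (fun C U => bperp B (C.space (j+1)) ⊓ U = C.space m)
  · rintro C D D' had ⟨h1, h2, h3⟩
    refine ⟨fun i hi => ?_, fun i hi hi' => ?_, fun i hi hi' => ?_⟩
    · rw [← had i (by omega)]; exact h1 i hi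
    · rw [← had i (by omega)]; exact h2 i hi hi'
    · rw [← had i (by omega)]; exact h3 i hi hi'
  · intro C D
    constructor
    · rintro ⟨h1, h2, h3⟩
      exact ⟨⟨h1, fun i hi hi' => h2 i hi (by omega), fun i hi hi' => h3 i (by omega) hi'⟩,
        h3 j (by omega) hjn.le⟩
    · rintro ⟨⟨h1, h2, h3⟩, h4⟩
      refine ⟨h1, fun i hi hi' => h2 i hi (by omega), fun i hi hi' => ?_⟩
      rcases Nat.lt_or_ge j i with h | h
      · exact h3 i h hi'
      · have : i = j := by omega
        rw [this]; exact h4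
  · intro C D
    constructor
    · rintro ⟨h1, h2, h3⟩
      exact ⟨⟨h1, fun i hi hi' => h2 i hi (by omega), fun i hi hi' => h3 i (by omega) hi'⟩,
        h2 j hmj le_rfl⟩
    · rintro ⟨⟨h1, h2, h3⟩, h4⟩
      refine ⟨h1, fun i hi hi' => ?_, fun i hi hi' => h3 i hi hi'⟩
      rcases Nat.lt_or_ge i j with h | h
      · exact h2 i hi h
      · have : i = j := by omega
        rw [this]; exact h4
  · rintro C D ⟨h1, h2, h3⟩
    have hup : upper j D = D.space (j+1) := if_pos hjn
    have hG := h3 (j+1) (by omega) (by omega)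
    have hCmE : C.space m ≤ D.space (j-1) := by
      rw [← h1 m le_rfl]; exact D.le (by omega) (by omega)
    refine ⟨D.space (j-1) ⊔ C.space (m+1), ?_⟩
    rw [hup]
    apply LA1 (P := bperp B (C.space j)) (Pp := bperp B (C.space (j+1))) hCmE
      (C.le (by omega) (by omega)) (C.le_bp (by omega) (by omega))
      (bperp_anti (C.le (by omega) (by omega))) (D.le (by omega) (by omega))
    · rcases Nat.lt_or_ge m (j-1) with h | h
      · have := h2 (j-1) h (by omega)
        rwa [show j - 1 + 1 = j by omega] at this
      · have : j - 1 = m := by omega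
        rw [this, h1 m le_rfl]
        exact inf_eq_right.mpr (C.le_bp (by omega) (by omega))
    · rw [← hG]; exact inf_le_right
    · rw [hG]; exact le_sup_right
    · rw [C.rank (by omega), C.rank (by omega)]

lemma stepT (halt : IsAltForm B) (hnd : NondegForm B) (hdim : finrank F V = 2 * n)
    {m : ℕ} (hmn : m < n) :
    relM (relR1 (B := B) (n := n) m (n-1)) * TM B n n = relM (relR2 m n) := by
  apply rel_mul_TM' halt (by omega) le_rfl _ _
    (fun C D => (∀ i ≤ m, D.space i = C.space i) ∧
      (∀ i, m < i → i < n → bperp B (C.space (i+1)) ⊓ D.space i = C.space m ∧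
        D.space i ≤ bperp B (C.space (m+1))))
    (fun C U => bperp B (C.space n) ⊓ U = C.space (m+1))
    (fun C U => bperp B (C.space n) ⊓ U = C.space m)
  · rintro C D D' had ⟨h1, h2⟩
    refine ⟨fun i hi => ?_, fun i hi hi' => ?_⟩
    · rw [← had i (by omega)]; exact h1 i hi
    · rw [← had i (by omega)]; exact h2 i hi hi'
  · intro C D
    constructor
    · rintro ⟨h1, h2, h3⟩
      have h4 := h3 n (by omega) le_rfl
      refine ⟨⟨h1, fun i hi hi' => ⟨h2 i hi (by omega), ?_⟩⟩, h4⟩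
      have : C.space (m+1) ≤ D.space n := by rw [← h4]; exact inf_le_right
      exact (D.le_bp hi'.le le_rfl).trans (bperp_anti this)
    · rintro ⟨⟨h1, h2⟩, h4⟩
      refine ⟨h1, fun i hi hi' => (h2 i hi (by omega)).1, fun i hi hi' => ?_⟩
      have : i = n := by omega
      rw [this]; exact h4
  · intro C D
    constructor
    · rintro ⟨h1, h2, h3⟩
      exact ⟨⟨h1, h2⟩, h3 n le_rfl le_rfl⟩
    · rintro ⟨⟨h1, h2⟩, h4⟩
      refine ⟨h1, h2, fun i hi hi' => ?_⟩
      have : i = n := by omega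
      rw [this]; exact h4
  · rintro C D ⟨h1, h2⟩
    have hup : upper n D = bperp B (D.space (n-1)) := if_neg (lt_irrefl n)
    have hCmE : C.space m ≤ D.space (n-1) := by
      rw [← h1 m le_rfl]; exact D.le (by omega) (by omega)
    have hE : bperp B (C.space n) ⊓ D.space (n-1) = C.space m ∧
        D.space (n-1) ≤ bperp B (C.space (m+1)) := by
      rcases Nat.lt_or_ge m (n-1) with h | h
      · have := h2 (n-1) h (by omega)
        rwa [show n - 1 + 1 = n by omega] at this
      · have : n - 1 = m := by omega
        rw [this, h1 m le_rfl]
        exact ⟨inf_eq_right.mpr (C.le_bp (by omega) (by omega)), C.le_bp (by omega) (by omega)⟩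
    have hCaG : C.space (m+1) ≤ bperp B (D.space (n-1)) := (le_bperp_comm halt).mp hE.2
    refine ⟨D.space (n-1) ⊔ C.space (m+1), ?_⟩
    rw [hup]
    have hCar : finrank F (C.space (m+1)) = finrank F (C.space m) + 1 := by
      rw [C.rank (by omega), C.rank (by omega)]
    have hEG : D.space (n-1) ≤ bperp B (D.space (n-1)) := D.le_bp (by omega) (by omega)
    apply LA1 (P := bperp B (C.space n)) (Pp := bperp B (C.space n)) hCmE
      (C.le (by omega) (by omega)) (C.le_bp (by omega) (by omega))
      le_rfl hEG hE.1 hCaG ?_ hCar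
    have hiso : D.space (n-1) ⊔ C.space (m+1) ≤ bperp B (D.space (n-1) ⊔ C.space (m+1)) := by
      rw [bperp_sup]
      exact le_inf (sup_le hEG hCaG) (sup_le hE.2 (C.le_bp (by omega) (by omega)))
    have hinf : D.space (n-1) ⊓ C.space (m+1) = C.space m := by
      apply le_antisymm
      · rw [← hE.1]; exact le_inf (inf_le_right.trans (C.le_bp (by omega) (by omega))) inf_le_left
      · exact le_inf hCmE (C.le (by omega) (by omega))
    have heq : D.space (n-1) ⊔ C.space (m+1) = bperp B (D.space (n-1) ⊔ C.space (m+1)) := by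
      apply Submodule.eq_of_le_of_finrank_eq hiso
      have e1 := Submodule.finrank_sup_add_finrank_inf_eq (D.space (n-1)) (C.space (m+1))
      have e2 := finrank_bperp halt hnd (D.space (n-1) ⊔ C.space (m+1))
      rw [hinf, C.rank (by omega), C.rank (by omega), D.rank (by omega)] at e1
      omega
    rw [heq, bperp_sup]
    exact le_inf inf_le_right (inf_le_left.trans (bperp_anti (C.le (by omega) (by omega))))

lemma step2 (halt : IsAltForm B) (hnd : NondegForm B)
    {m j : ℕ} (hmj : m < j) (hjn : j < n) :
    relM (relR2 (B := B) (n := n) m (j+1)) * TM B n j = relM (relR2 m j) := by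
  apply rel_mul_TM' halt (by omega) hjn.le _ _
    (fun C D => (∀ i ≤ m, D.space i = C.space i) ∧
      (∀ i, m < i → i < j → bperp B (C.space (i+1)) ⊓ D.space i = C.space m ∧
        D.space i ≤ bperp B (C.space (m+1))) ∧
      ∀ i, j < i → i ≤ n → bperp B (C.space i) ⊓ D.space i = C.space m)
    (fun C U => bperp B (C.space (j+1)) ⊓ U = C.space m ∧ U ≤ bperp B (C.space (m+1)))
    (fun C U => bperp B (C.space j) ⊓ U = C.space m)
  · rintro C D D' had ⟨h1, h2, h3⟩
    refine ⟨fun i hi => ?_, fun i hi hi' => ?_, fun i hi hi' => ?_⟩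
    · rw [← had i (by omega)]; exact h1 i hi
    · rw [← had i (by omega)]; exact h2 i hi hi'
    · rw [← had i (by omega)]; exact h3 i hi hi'
  · intro C D
    constructor
    · rintro ⟨h1, h2, h3⟩
      exact ⟨⟨h1, fun i hi hi' => h2 i hi (by omega), fun i hi hi' => h3 i (by omega) hi'⟩,
        h2 j hmj (by omega)⟩
    · rintro ⟨⟨h1, h2, h3⟩, h4⟩
      refine ⟨h1, fun i hi hi' => ?_, fun i hi hi' => h3 i hi hi'⟩
      rcases Nat.lt_or_ge i j with h | h
      · exact h2 i hi h
      · have : i = j := by omega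
        rw [this]; exact h4
  · intro C D
    constructor
    · rintro ⟨h1, h2, h3⟩
      exact ⟨⟨h1, fun i hi hi' => h2 i hi (by omega), fun i hi hi' => h3 i (by omega) hi'⟩,
        h3 j le_rfl hjn.le⟩
    · rintro ⟨⟨h1, h2, h3⟩, h4⟩
      refine ⟨h1, h2, fun i hi hi' => ?_⟩
      rcases Nat.lt_or_ge j i with h | h
      · exact h3 i h hi'
      · have : i = j := by omega
        rw [this]; exact h4
  · rintro C D ⟨h1, h2, h3⟩
    have hup : upper j D = D.space (j+1) := if_pos hjn
    have hG := h3 (j+1) (by omega) (by omega)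
    have hCmE : C.space m ≤ D.space (j-1) := by
      rw [← h1 m le_rfl]; exact D.le (by omega) (by omega)
    have hE : bperp B (C.space j) ⊓ D.space (j-1) = C.space m ∧
        D.space (j-1) ≤ bperp B (C.space (m+1)) := by
      rcases Nat.lt_or_ge m (j-1) with h | h
      · have := h2 (j-1) h (by omega)
        rwa [show j - 1 + 1 = j by omega] at this
      · have : j - 1 = m := by omega
        rw [this, h1 m le_rfl]
        exact ⟨inf_eq_right.mpr (C.le_bp (by omega) (by omega)), C.le_bp (by omega) (by omega)⟩
    have hEG : D.space (j-1) ≤ D.space (j+1) := D.le (by omega) (by omega)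
    have hED0 : D.space (j-1) ≤ bperp B (C.space (m+1)) ⊓ D.space (j+1) := le_inf hE.2 hEG
    have hrE : finrank F (D.space (j-1)) = j - 1 := D.rank (by omega)
    have hGC := rel_sym halt hnd (by omega) (by omega) (h1 m le_rfl) hG
    have hGa : bperp B (D.space (j+1)) ⊓ C.space (m+1) = C.space m := by
      apply le_antisymm
      · exact (inf_le_inf_left _ (C.le (by omega) (by omega))).trans hGC.le
      · refine le_inf ?_ (C.le (by omega) (by omega))
        rw [← hGC]; exact inf_le_left
    have hr : finrank F (bperp B (C.space (m+1)) ⊓ D.space (j+1) : Submodule F V) =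
        finrank F (D.space (j-1)) + 1 := by
      have := finrank_swap halt hnd (C.space (m+1)) (D.space (j+1))
      rw [hGa, C.rank (by omega), C.rank (by omega), D.rank (by omega)] at this
      omega
    refine ⟨bperp B (C.space (m+1)) ⊓ D.space (j+1), hED0, hup ▸ inf_le_right, hr, ?_⟩
    rw [hup]
    intro U hU1 hU2 hU3
    constructor
    · constructor
      · rintro ⟨-, h⟩
        apply Submodule.eq_of_le_of_finrank_eq (le_inf h hU2)
        rw [hU3, hr]
      · intro h
        refine ⟨le_antisymm ?_ (le_inf (C.le_bp (by omega) (by omega)) (hCmE.trans hU1)), ?_⟩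
        · exact (inf_le_inf_left _ hU2).trans hG.le
        · rw [h]; exact inf_le_left
    · constructor
      · intro h h'
        have e := finrank_swap halt hnd (C.space j) U
        rw [h, C.rank (by omega), C.rank (by omega), hU3, hrE] at e
        have : C.space (m+1) ≤ bperp B U ⊓ C.space j := by
          refine le_inf ((le_bperp_comm halt).mp ?_) (C.le (by omega) (by omega))
          rw [h']; exact inf_le_left
        have := Submodule.finrank_mono this
        rw [C.rank (by omega)] at this
        omega
      · intro hne
        have hi := inf_covers hU1 hED0 hU3 hr hne
        apply le_antisymm
        · have : bperp B (C.space j) ⊓ U ≤ D.space (j-1) := by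
            rw [← hi]
            exact le_inf inf_le_right (le_inf
              (inf_le_left.trans (bperp_anti (C.le (by omega) (by omega)))) (inf_le_right.trans hU2))
          rw [← hE.1]
          exact le_inf inf_le_left this
        · exact le_inf (C.le_bp (by omega) (by omega)) (hCmE.trans hU1)

lemma rel_JM (halt : IsAltForm B) (hnd : NondegForm B) (hdim : finrank F V = 2 * n)
    {m : ℕ} (k : ℕ) (hk : m + k < n) :
    relM (relR1 (B := B) (n := n) m (n-k-1)) * JM (fun i => TM B n (n-i)) k =
      relM (relR2 m (n-k)) := by
  induction k with
  | zero => exact stepT halt hnd hdim hk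
  | succ k ih =>
    simp only [JM]
    rw [← mul_assoc, ← mul_assoc, step1 halt (by omega) (by omega)]
    have := ih (by omega)
    rw [show n - k - 1 = n - (k+1) by omega] at this
    rw [this]
    have := step2 (B := B) (n := n) halt hnd (m := m) (j := n - (k+1)) (by omega) (by omega)
    rwa [show n - (k+1) + 1 = n - k by omega] at this

lemma relO_succ (halt : IsAltForm B) (hnd : NondegForm B) (hdim : finrank F V = 2 * n)
    {k : ℕ} (hk : k < n) :
    relM (relO (B := B) (n := n) (n-k)) * JM (fun i => TM B n (n-i)) k =
      relM (relO (n-(k+1))) := by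
  have := rel_JM (B := B) (m := n - (k+1)) halt hnd hdim k (by omega)
  rw [show n - k - 1 = n - (k+1) by omega, relR1_eq (by omega)] at this
  rw [show n - (k+1) + 1 = n - k by omega] at this
  rw [this, ← relR2_eq, show n - (k+1) + 1 = n - k by omega]

lemma JMprod_relO (halt : IsAltForm B) (hnd : NondegForm B) (hdim : finrank F V = 2 * n)
    (k : ℕ) (hk : k ≤ n) :
    JMprod (fun i => TM B n (n-i)) k = relM (relO (n-k)) := by
  induction k with
  | zero =>
    simp only [JMprod, Nat.sub_zero]
    rw [relO_n]
    ext C D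
    rw [relM_apply, Matrix.one_apply]
  | succ k ih =>
    simp only [JMprod]
    rw [ih (by omega), relO_succ halt hnd hdim (by omega)]

lemma relO_sym (halt : IsAltForm B) (hnd : NondegForm B) {m : ℕ} (_hm : m ≤ n) (C D : Cham B n)
    (h : relO m C D) : relO m D C := by
  obtain ⟨h1, h2⟩ := h
  refine ⟨fun i hi => (h1 i hi).symm, fun i hi hi' => ?_⟩
  rw [h1 m le_rfl]
  exact rel_sym halt hnd hi.le hi' (h1 m le_rfl) (h2 i hi hi')

/-- opposition away from position `j` -/
def relK (m j : ℕ) (C D : Cham B n) : Prop :=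
  (∀ i ≤ m, D.space i = C.space i) ∧
    ∀ i, m < i → i ≤ n → i ≠ j → bperp B (C.space i) ⊓ D.space i = C.space m

lemma relK_sym (halt : IsAltForm B) (hnd : NondegForm B) {m j : ℕ} (_hm : m ≤ n) (C D : Cham B n)
    (h : relK m j C D) : relK m j D C := by
  obtain ⟨h1, h2⟩ := h
  refine ⟨fun i hi => (h1 i hi).symm, fun i hi hi' hij => ?_⟩
  rw [h1 m le_rfl]
  exact rel_sym halt hnd hi.le hi' (h1 m le_rfl) (h2 i hi hi' hij)

lemma relK_adj {m j : ℕ} (hmj : m < j) {C D D' : Cham B n} (had : Adj j D D')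
    (h : relK m j C D) : relK m j C D' := by
  obtain ⟨h1, h2⟩ := h
  refine ⟨fun i hi => ?_, fun i hi hi' hij => ?_⟩
  · rw [← had i (by omega)]; exact h1 i hi
  · rw [← had i hij]; exact h2 i hi hi' hij

lemma relK_TM (halt : IsAltForm B) (hnd : NondegForm B) (hdim : finrank F V = 2 * n)
    {m j : ℕ} (hmj : m < j) (hjn : j ≤ n) :
    relM (fun C D : Cham B n => relK m j C D ∧ ¬ relO m C D) * TM B n j = relM (relO m) := by
  have hOK : ∀ C D : Cham B n, relO m C D ↔ relK m j C D ∧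
      bperp B (C.space j) ⊓ D.space j = C.space m := by
    intro C D
    constructor
    · rintro ⟨h1, h2⟩
      exact ⟨⟨h1, fun i hi hi' _ => h2 i hi hi'⟩, h2 j hmj hjn⟩
    · rintro ⟨⟨h1, h2⟩, h3⟩
      refine ⟨h1, fun i hi hi' => ?_⟩
      by_cases h : i = j
      · rw [h]; exact h3
      · exact h2 i hi hi' h
  apply rel_mul_TM' halt (by omega) hjn _ _ (relK m j)
    (fun C U => ¬ (bperp B (C.space j) ⊓ U = C.space m))
    (fun C U => bperp B (C.space j) ⊓ U = C.space m)
  · exact fun C D D' had h => relK_adj hmj had h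
  · intro C D
    rw [hOK]; tauto
  · exact hOK
  · rintro C D ⟨h1, h2⟩
    have hCmE : C.space m ≤ D.space (j-1) := by
      rw [← h1 m le_rfl]; exact D.le (by omega) (by omega)
    have hE : bperp B (C.space j) ⊓ D.space (j-1) = C.space m := by
      apply le_antisymm
      · rcases Nat.lt_or_ge m (j-1) with h | h
        · rw [← h2 (j-1) h (by omega) (by omega)]
          exact inf_le_inf_right _ (bperp_anti (C.le (by omega) hjn))
        · have : j - 1 = m := by omega
          rw [this, h1 m le_rfl]; exact inf_le_right
      · exact le_inf (C.le_bp (by omega) hjn) hCmE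
    have hrE : finrank F (D.space (j-1)) = j - 1 := D.rank (by omega)
    have hEG : D.space (j-1) ≤ upper j D := (D.le (by omega) hjn).trans (le_upper hjn D)
    have hGC : bperp B (upper j D) ⊓ C.space j = C.space m := by
      by_cases hj : j < n
      · rw [show upper j D = D.space (j+1) from if_pos hj]
        have := rel_sym halt hnd (by omega) (by omega) (h1 m le_rfl)
          (h2 (j+1) (by omega) (by omega) (by omega))
        apply le_antisymm
        · rw [← this]; exact inf_le_inf_left _ (C.le (by omega) (by omega))
        · refine le_inf ?_ (C.le (by omega) hjn)
          rw [← this]; exact inf_le_left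
      · rw [show upper j D = bperp B (D.space (j-1)) from if_neg hj, bperp_bperp halt hnd]
        apply le_antisymm
        · rw [← hE]
          exact le_inf (inf_le_right.trans (C.le_bp hjn hjn)) inf_le_left
        · exact le_inf hCmE (C.le (by omega) hjn)
    set M := bperp B (C.space j) ⊓ upper j D with hM
    have hrM : finrank F M = m + 1 := by
      have := finrank_swap halt hnd (C.space j) (upper j D)
      rw [hGC, C.rank hjn, C.rank (by omega), rank_upper halt hnd hdim (by omega) hjn] at this
      rw [hM]
      omega
    have hEM : D.space (j-1) ⊓ M = C.space m := by
      apply le_antisymm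
      · rw [← hE]; exact le_inf (inf_le_right.trans inf_le_left) inf_le_left
      · exact le_inf hCmE (le_inf (C.le_bp (by omega) hjn) (hCmE.trans hEG))
    have hr : finrank F (D.space (j-1) ⊔ M : Submodule F V) = finrank F (D.space (j-1)) + 1 := by
      have := Submodule.finrank_sup_add_finrank_inf_eq (D.space (j-1)) M
      rw [hEM, hrM, C.rank (by omega)] at this
      omega
    refine ⟨D.space (j-1) ⊔ M, le_sup_left, sup_le hEG inf_le_right, hr, ?_⟩
    intro U hU1 hU2 hU3
    have key : bperp B (C.space j) ⊓ U = C.space m ↔ U ≠ D.space (j-1) ⊔ M := by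
      constructor
      · rintro h h'
        have : M ≤ C.space m := by
          rw [← h, h']; exact le_inf inf_le_left le_sup_right
        have := Submodule.finrank_mono this
        rw [hrM, C.rank (by omega)] at this
        omega
      · intro hne
        have hi := inf_covers hU1 (le_sup_left : _ ≤ D.space (j-1) ⊔ M) hU3 hr hne
        apply le_antisymm
        · have : bperp B (C.space j) ⊓ U ≤ D.space (j-1) := by
            rw [← hi]
            exact le_inf inf_le_right ((inf_le_inf_left _ hU2).trans le_sup_right)
          rw [← hE]
          exact le_inf inf_le_left this
        · exact le_inf (C.le_bp (by omega) hjn) (hCmE.trans hU1)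
    exact ⟨by rw [key]; tauto, key⟩

lemma relM_transpose {α : Type*} {R : α → α → Prop} (h : ∀ a b, R a b → R b a) :
    (relM R).transpose = relM R := by
  ext a b
  rw [Matrix.transpose_apply, relM_apply, relM_apply]
  congr 1
  exact propext ⟨h b a, h a b⟩

lemma relO_comm {q : ℕ} (hq : Fintype.card F = q)
    (halt : IsAltForm B) (hnd : NondegForm B) (hdim : finrank F V = 2 * n)
    {m j : ℕ} (hmj : m < j) (hjn : j ≤ n) :
    Commute (TM B n j) (relM (relO m)) := by
  have h1 := relK_TM (B := B) halt hnd hdim hmj hjn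
  have hOK : ∀ C D : Cham B n, relO m C D → relK m j C D :=
    fun C D h => ⟨h.1, fun i hi hi' _ => h.2 i hi hi'⟩
  have h2 : relM (fun C D : Cham B n => relK m j C D ∧ ¬ relO m C D) =
      relM (relK m j) - relM (relO m) := by
    ext C D
    rw [Matrix.sub_apply, relM_apply, relM_apply, relM_apply]
    have := hOK C D
    by_cases a : relO m C D
    · simp [a, this a]
    · by_cases b : relK m j C D <;> simp [a, b]
  have h3 : relM (relK m j) * TM B n j = (q:ℝ) • relM (relK (B := B) (n := n) m j) := by
    ext C D
    unfold TM
    rw [mul_sub, mul_one, Matrix.sub_apply, Matrix.mul_apply, Matrix.smul_apply]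
    have : ∑ D' : Cham B n, relM (relK m j) C D' * relM (Adj j) D' D =
        relM (relK m j) C D * ((q:ℝ) + 1) := by
      rw [← panel_sum hq halt hnd hdim (by omega) hjn D, Finset.mul_sum]
      apply Finset.sum_congr rfl
      intro D' _
      simp only [relM_apply]
      by_cases ha : Adj j D' D
      · have : relK m j C D' ↔ relK m j C D :=
          ⟨fun h => relK_adj hmj ha h, fun h => relK_adj hmj ha.symm h⟩
        simp [this]
      · simp [ha]
    rw [this, smul_eq_mul]
    ring
  have h4 : relM (relO m) * TM B n j =
      (q:ℝ) • relM (relK (B := B) (n := n) m j) - relM (relO m) := by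
    rw [h2, sub_mul, h3] at h1
    rw [sub_eq_iff_eq_add] at h1
    rw [h1]; abel
  have h5 := congrArg Matrix.transpose h4
  rw [Matrix.transpose_mul, TM_transpose, Matrix.transpose_sub, Matrix.transpose_smul,
    relM_transpose (relO_sym halt hnd (by omega)), relM_transpose (relK_sym halt hnd (by omega)),
    ← h4] at h5
  exact h5

end Geo

section Spec

variable {F V : Type} [Field F] [AddCommGroup V] [Module F V]
variable {B : V →ₗ[F] V →ₗ[F] F} {n : ℕ}
variable [FiniteDimensional F V] [Fintype F] [Fintype (Cham B n)]

open Matrix in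
lemma opp_psd {q : ℕ} (hq : Fintype.card F = q)
    (halt : IsAltForm B) (hnd : NondegForm B) (hdim : finrank F V = 2 * n) :
    (relM (FlagOpp (B := B) (J := Finset.Icc 1 n)) +
      ((q:ℝ)^(n*(n-1))) • (1 : Matrix (Cham B n) (Cham B n) ℝ)).PosSemidef := by
  have hq1 : 1 < q := hq ▸ Fintype.one_lt_card
  have hq1' : (1:ℝ) < q := by exact_mod_cast hq1
  have hO : relM (FlagOpp (B := B) (J := Finset.Icc 1 n)) = relM (relO 0) := by
    congr 1
    funext C D
    exact propext (relO_zero C D).symm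
  have hOT := relM_transpose (relO_sym (B := B) (n := n) halt hnd (Nat.zero_le n))
  rw [hO]
  apply Matrix.PosSemidef.of_dotProduct_mulVec_nonneg
  · unfold Matrix.IsHermitian
    rw [Matrix.conjTranspose_eq_transpose_of_trivial, Matrix.transpose_add,
      Matrix.transpose_smul, Matrix.transpose_one, hOT]
  · intro x
    let φ := Matrix.toLpLinAlgEquiv (n := Cham B n) (R := ℝ) 2
    let φm : Matrix (Cham B n) (Cham B n) ℝ →* Module.End ℝ (EuclideanSpace ℝ (Cham B n)) :=
      (φ : Matrix (Cham B n) (Cham B n) ℝ →* Module.End ℝ (EuclideanSpace ℝ (Cham B n)))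
    have hφ : ∀ M y, φm M y = WithLp.toLp 2 (M *ᵥ y.ofLp) := by
      intro M y
      rfl
    have hp := JMprod_relO (B := B) halt hnd hdim
    have hmap : ∀ k, JMprod (fun i => φm (TM B n (n-i))) k =
        φm (JMprod (fun i => TM B n (n-i)) k) := fun k => (JMprod_map φm _ k).symm
    have key := JMprod_lower (E := EuclideanSpace ℝ (Cham B n)) q hq1'
      (fun i => φm (TM B n (n-i))) n ?_ ?_ ?_ ?_ (WithLp.toLp 2 x)
    · rw [hmap, hp n le_rfl, hφ, Nat.sub_self] at key
      rw [Matrix.add_mulVec, Matrix.smul_mulVec, Matrix.one_mulVec, dotProduct_add,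
        dotProduct_smul, smul_eq_mul, star_trivial]
      rw [EuclideanSpace.inner_toLp_toLp, EuclideanSpace.inner_toLp_toLp, star_trivial,
        dotProduct_comm] at key
      exact key
    · intro i hi y z
      rw [hφ, hφ, EuclideanSpace.inner_eq_star_dotProduct, EuclideanSpace.inner_eq_star_dotProduct]
      simp only [star_trivial]
      rw [Matrix.dotProduct_mulVec, ← Matrix.mulVec_transpose, TM_transpose]
    · intro i hi
      change φ _ * φ _ = _ • φ _ + _
      rw [← map_mul, TM_sq hq halt hnd hdim (by omega) (by omega), map_add, map_smul, map_smul,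
        map_one]
    · intro i j hij hj
      exact ((TM_far (B := B) halt (i := n - j) (j := n - i) (by omega) (by omega) (by omega)).map
        φm).symm
    · intro k hk i hi
      rw [hmap, hp k hk]
      exact (relO_comm hq halt hnd hdim (by omega) (by omega)).map φm

/-- indicator vector -/
noncomputable def chi {α : Type*} (T : Set α) : α → ℝ := fun a => if a ∈ T then 1 else 0

lemma chi_dot {α : Type*} [Fintype α] (T U : Set α) :
    chi T ⬝ᵥ chi U = ((T ∩ U).ncard : ℝ) := by
  unfold dotProduct chi
  have : ∀ a, (if a ∈ T then (1:ℝ) else 0) * (if a ∈ U then 1 else 0) =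
      if a ∈ T ∩ U then 1 else 0 := by
    intro a
    by_cases h1 : a ∈ T <;> by_cases h2 : a ∈ U <;> simp [h1, h2]
  simp only [this]
  rw [Finset.sum_boole, Set.ncard_eq_toFinset_card']
  congr 2
  ext a
  simp

open Matrix in
lemma relM_chi {α : Type*} [Fintype α] (R : α → α → Prop) (U : Set α) (a : α) :
    (relM R *ᵥ chi U) a = ({b | b ∈ U ∧ R a b}.ncard : ℝ) := by
  unfold Matrix.mulVec dotProduct chi
  have : ∀ b, relM R a b * (if b ∈ U then 1 else 0) = if (b ∈ U ∧ R a b) then 1 else 0 := by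
    intro b
    rw [relM_apply]
    by_cases h1 : R a b <;> by_cases h2 : b ∈ U <;> simp [h1, h2]
  simp only [this]
  rw [Finset.sum_boole, Set.ncard_eq_toFinset_card']
  congr 2
  ext a
  simp

open Matrix in
lemma main_Y {q : ℕ} (hq : Fintype.card F = q)
    (halt : IsAltForm B) (hnd : NondegForm B) (hdim : finrank F V = 2 * n)
    (FF : Set (Cham B n)) (hEKR : IsEKRFlags FF)
    (hsharp : (FF.ncard : ℝ) = (Nat.card (Cham B n) : ℝ) / ((q : ℝ) ^ n + 1))
    (s : ℕ) (hs1 : 1 ≤ s) (hsn : s ≤ n)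
    (S : Submodule F V) (hSiso : IsTotIso B S) (hSrank : Module.finrank F S = s) (hn : 1 ≤ n) :
    (∏ r ∈ Finset.range n, (q:ℝ) ^ (if r < s then s-r-1 else 2*(n-r)-1)) *
      ({C ∈ FF | S ⊓ bperp B (SFlag.space C s) = ⊥}.ncard : ℝ) =
    (q:ℝ)^(n*(n-1)) * (({C : Cham B n | C.space s = S}.ncard : ℝ) -
      ({C ∈ FF | SFlag.space C s = S}.ncard : ℝ)) := by
  have hq1 : 1 < q := hq ▸ Fintype.one_lt_card
  have hq1' : (1:ℝ) < q := by exact_mod_cast hq1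
  set A := relM (FlagOpp (B := B) (J := Finset.Icc 1 n)) with hA
  set μ := (q:ℝ)^(n*(n-1)) with hμ
  set dd := ∏ r ∈ Finset.range n, (q:ℝ) ^ (if r < s then s-r-1 else 2*(n-r)-1) with hdd
  have hpsd := opp_psd (B := B) hq halt hnd hdim
  rw [← hA, ← hμ] at hpsd
  have hAT : Aᵀ = A := by
    rw [hA]
    apply relM_transpose
    intro C D h
    rw [← relO_zero] at h ⊢
    exact relO_sym halt hnd (Nat.zero_le n) C D h
  have hsymm : ∀ x y, x ⬝ᵥ (A *ᵥ y) = (A *ᵥ x) ⬝ᵥ y := by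
    intro x y
    rw [Matrix.dotProduct_mulVec, ← Matrix.mulVec_transpose, hAT]
  set deg := (q:ℝ)^(n*n) with hdeg
  have hA1 : A *ᵥ chi Set.univ = deg • chi Set.univ := by
    funext C
    rw [hA, relM_chi]
    have := count_opp hq halt hnd hdim 0 (Nat.zero_le n) ⊥ (by intro u hu w _; simp at hu; simp [hu])
      (by simp) C (by simp)
    have h2 : {b : Cham B n | b ∈ Set.univ ∧ FlagOpp C b} =
        {D | D.space 0 = ⊥ ∧ FlagOpp C D} := by
      ext D; simp [D.zero]
    rw [h2, this]
    simp only [chi, Pi.smul_apply, Set.mem_univ, if_true, smul_eq_mul, mul_one, Nat.not_lt_zero,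
      if_false]
    rw [Finset.prod_pow_eq_pow_sum, hdeg]
    congr 1
    rw [← Finset.sum_range_reflect]
    have : ∀ k, ∑ j ∈ Finset.range k, (2 * j + 1) = k * k := by
      intro k
      induction k with
      | zero => rfl
      | succ k ih => rw [Finset.sum_range_succ, ih]; ring
    rw [← this n]
    apply Finset.sum_congr rfl
    intro j hj
    rw [Finset.mem_range] at hj
    omega
  set P : Set (Cham B n) := {C | C.space s = S} with hP
  set Q : Set (Cham B n) := {C | S ⊓ bperp B (C.space s) = ⊥} with hQ
  have hAP : A *ᵥ chi P = dd • chi Q := by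
    funext C
    rw [hA, relM_chi]
    simp only [Pi.smul_apply, smul_eq_mul, chi]
    by_cases hC : C ∈ Q
    · rw [if_pos hC, mul_one]
      exact count_opp hq halt hnd hdim s hsn S hSiso hSrank C (by rw [inf_comm]; exact hC)
    · rw [if_neg hC, mul_zero]
      have : {b : Cham B n | b ∈ P ∧ FlagOpp C b} = ∅ := by
        ext D
        simp only [Set.mem_ofPred_eq, Set.mem_empty_iff_false, iff_false]
        rintro ⟨h1, h2⟩
        apply hC
        have := h2 s (Finset.mem_Icc.mpr ⟨hs1, hsn⟩)
        have h1' : D.space s = S := h1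
        rw [h1', inf_comm] at this
        exact this
      rw [this]; simp
  have hFF : chi FF ⬝ᵥ (A *ᵥ chi FF) = 0 := by
    unfold dotProduct
    apply Finset.sum_eq_zero
    intro C _
    by_cases hC : C ∈ FF
    · rw [hA, relM_chi]
      have : {b : Cham B n | b ∈ FF ∧ FlagOpp C b} = ∅ := by
        ext D
        simp only [Set.mem_ofPred_eq, Set.mem_empty_iff_false, iff_false]
        rintro ⟨h1, h2⟩
        exact hEKR C hC D h1 h2
      rw [this]; simp
    · simp [chi, hC]
  set N : ℝ := (Nat.card (Cham B n) : ℝ) with hN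
  have hqn : (0:ℝ) < (q:ℝ)^n + 1 := by positivity
  set c : ℝ := 1 / ((q:ℝ)^n + 1) with hc
  have hcq : c * ((q:ℝ)^n + 1) = 1 := by rw [hc]; field_simp
  have hFc : (FF.ncard : ℝ) = c * N := by rw [hsharp, hc]; ring
  have hdm : deg = μ * (q:ℝ)^n := by
    rw [hdeg, hμ, ← pow_add]
    congr 1
    obtain ⟨k, rfl⟩ : ∃ k, n = k + 1 := ⟨n-1, by omega⟩
    simp only [Nat.add_sub_cancel]; ring
  set f : Cham B n → ℝ := chi FF - c • chi Set.univ with hf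
  have d1 : chi FF ⬝ᵥ chi FF = c * N := by rw [chi_dot, Set.inter_self, hFc]
  have d2 : chi FF ⬝ᵥ chi (Set.univ : Set (Cham B n)) = c * N := by
    rw [chi_dot, Set.inter_univ, hFc]
  have d3 : chi (Set.univ : Set (Cham B n)) ⬝ᵥ chi Set.univ = N := by
    rw [chi_dot, Set.inter_self, Set.ncard_univ]
  have d2' : chi (Set.univ : Set (Cham B n)) ⬝ᵥ chi FF = c * N := by rw [dotProduct_comm, d2]
  have hker : (A + μ • (1 : Matrix (Cham B n) (Cham B n) ℝ)) *ᵥ f = 0 := by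
    rw [← hpsd.dotProduct_mulVec_zero_iff, star_trivial]
    rw [Matrix.add_mulVec, Matrix.smul_mulVec, Matrix.one_mulVec, dotProduct_add,
      dotProduct_smul]
    have e1 : f ⬝ᵥ (A *ᵥ f) = - 2 * c * (deg * (c * N)) + c * c * deg * N := by
      rw [hf, Matrix.mulVec_sub, Matrix.mulVec_smul, hA1, sub_dotProduct, dotProduct_sub,
        dotProduct_sub, hFF, smul_dotProduct, smul_dotProduct, hsymm (chi Set.univ), hA1]
      simp only [dotProduct_smul, smul_dotProduct, smul_eq_mul, d2, d3, d2']
      ring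
    have e2 : f ⬝ᵥ f = c * N - c * c * N := by
      rw [hf, sub_dotProduct, dotProduct_sub, dotProduct_sub]
      simp only [dotProduct_smul, smul_dotProduct, smul_eq_mul, d1, d2, d3, d2']
      ring
    rw [e1, e2, smul_eq_mul, hdm]
    linear_combination (-μ * c * N) * hcq
  have h0 : chi P ⬝ᵥ ((A + μ • (1 : Matrix (Cham B n) (Cham B n) ℝ)) *ᵥ f) = 0 := by
    rw [hker, dotProduct_zero]
  rw [Matrix.add_mulVec, Matrix.smul_mulVec, Matrix.one_mulVec, dotProduct_add,
      dotProduct_smul, hsymm, hAP, smul_dotProduct, hf, dotProduct_sub, dotProduct_sub,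
      dotProduct_smul, dotProduct_smul] at h0
  have hQP : dd * (chi Q ⬝ᵥ chi Set.univ) = deg * (chi P ⬝ᵥ chi Set.univ) := by
    have := hsymm (chi P) (chi Set.univ)
    rw [hA1, hAP, dotProduct_smul, smul_dotProduct, smul_eq_mul, smul_eq_mul] at this
    exact this.symm
  have k1 : chi Q ⬝ᵥ chi FF = ({C ∈ FF | S ⊓ bperp B (SFlag.space C s) = ⊥}.ncard : ℝ) := by
    rw [dotProduct_comm, chi_dot]; rfl
  have k2 : chi P ⬝ᵥ chi FF = ({C ∈ FF | SFlag.space C s = S}.ncard : ℝ) := by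
    rw [dotProduct_comm, chi_dot]; rfl
  have k3 : chi P ⬝ᵥ chi Set.univ = (P.ncard : ℝ) := by
    rw [chi_dot, Set.inter_univ]
  rw [← k1, ← k2, ← k3]
  simp only [smul_eq_mul] at h0
  rw [hdm] at hQP
  linear_combination h0 + c * hQP + μ * (chi P ⬝ᵥ chi Set.univ) * hcq

end Spec

section Numeric

lemma prod_Icc_refl (g : ℕ → ℝ) (k : ℕ) :
    ∏ i ∈ Finset.Icc 1 k, g i = ∏ i ∈ Finset.range k, g (k - i) := by
  have h1 : ∏ i ∈ Finset.Icc 1 k, g i = ∏ i ∈ Finset.range k, g (i + 1) := by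
    induction k with
    | zero => simp
    | succ k ih => rw [Finset.prod_Icc_succ_top (by omega), ih, Finset.prod_range_succ]
  rw [h1, ← Finset.prod_range_reflect]
  apply Finset.prod_congr rfl
  intro i hi
  rw [Finset.mem_range] at hi
  congr 1
  omega

lemma PhiP_top {q : ℕ} (hq1 : 1 < q) (n s : ℕ) :
    PhiP q n s n = ∏ i ∈ Finset.range (n-s), ((q:ℝ)^(n-s-i) + 1) := by
  have hq1' : (1:ℝ) < q := by exact_mod_cast hq1
  unfold PhiP gaussq
  rw [Finset.prod_eq_one, one_mul]
  · rw [prod_Icc_refl, ← Finset.prod_range_reflect]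
    apply Finset.prod_congr rfl
    intro i hi
    rw [Finset.mem_range] at hi
    congr 2
    omega
  · intro i hi
    rw [Finset.mem_Icc] at hi
    rw [Nat.sub_self, Nat.zero_add]
    apply div_self
    have := one_lt_pow₀ hq1' (n := i) (by omega)
    linarith

lemma prod_count {q : ℕ} (hq1 : 1 < q) {n s : ℕ} (hs : s ≤ n) :
    ∏ r ∈ Finset.range n, ((q:ℝ)^(if r < s then s-r else 2*(n-r)) - 1) / ((q:ℝ) - 1) =
      zpol q s * zpol q (n-s) * PhiP q n s n := by
  have hq1' : (1:ℝ) < q := by exact_mod_cast hq1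
  obtain ⟨k, rfl⟩ := Nat.exists_eq_add_of_le hs
  rw [PhiP_top hq1, Finset.prod_range_add, mul_assoc]
  congr 1
  · unfold zpol
    rw [prod_Icc_refl]
    apply Finset.prod_congr rfl
    intro i hi
    rw [Finset.mem_range] at hi
    rw [if_pos hi]
  · unfold zpol
    rw [prod_Icc_refl, Nat.add_sub_cancel_left, ← Finset.prod_mul_distrib]
    apply Finset.prod_congr rfl
    intro i hi
    rw [if_neg (by omega), show 2 * (s + k - (s + i)) = (k - i) + (k - i) by omega, pow_add]
    field_simp
    ring

lemma total_count {q : ℕ} (hq1 : 1 < q) {n : ℕ} (hn : 1 ≤ n) :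
    (zpol q 0 * zpol q (n-0) * PhiP q n 0 n) / ((q:ℝ)^n + 1) = PhiP q n 1 n * zpol q n := by
  have hqn : (0:ℝ) < (q:ℝ)^n + 1 := by positivity
  have h0 : zpol q 0 = 1 := by simp [zpol]
  rw [PhiP_top hq1, PhiP_top hq1, h0, Nat.sub_zero]
  obtain ⟨k, rfl⟩ : ∃ k, n = k + 1 := ⟨n-1, by omega⟩
  rw [Finset.prod_range_succ', Nat.add_sub_cancel, Nat.sub_zero]
  have : ∀ i, k + 1 - (i + 1) = k - i := by intro i; omega
  simp only [this]
  field_simp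

lemma exps {n s : ℕ} (hs1 : 1 ≤ s) (hs : s ≤ n) :
    n * (n-1) = (2 * n * s - s * (3 * s - 1) / 2 - n) + (s * (s - 1) / 2 + (n - s) ^ 2) := by
  obtain ⟨k, rfl⟩ := Nat.exists_eq_add_of_le hs
  obtain ⟨t, rfl⟩ : ∃ t, s = t + 1 := ⟨s-1, by omega⟩
  obtain ⟨a, ha⟩ : ∃ a, t * (t+1) = 2 * a := by
    obtain ⟨a, ha⟩ := Nat.even_mul_succ_self t
    exact ⟨a, by omega⟩
  have e1 : (t+1) * (3 * (t+1) - 1) / 2 = 3 * a + t + 1 := by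
    have : (t+1) * (3 * (t+1) - 1) = 2 * (3 * a + t + 1) := by
      rw [show 3 * (t+1) - 1 = 3 * t + 2 by omega]
      nlinarith
    omega
  have e2 : (t+1) * (t+1-1) / 2 = a := by
    have : (t+1) * (t+1-1) = 2 * a := by rw [Nat.add_sub_cancel, ← ha]; ring
    omega
  have e3 : 2 * (t+1+k) * (t+1) = (a + 2*k*t + k) + (t+1+k) + (3 * a + t + 1) := by nlinarith
  rw [e1, e2, e3, Nat.add_sub_cancel, Nat.add_sub_cancel, Nat.add_sub_cancel_left,
    show t + 1 + k - 1 = t + k by omega]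
  nlinarith

lemma prod_expD (q : ℕ) {n s : ℕ} (hs : s ≤ n) :
    ∏ r ∈ Finset.range n, (q:ℝ) ^ (if r < s then s-r-1 else 2*(n-r)-1) =
      (q:ℝ) ^ (s * (s - 1) / 2 + (n - s) ^ 2) := by
  rw [Finset.prod_pow_eq_pow_sum]
  congr 1
  obtain ⟨k, rfl⟩ := Nat.exists_eq_add_of_le hs
  rw [Finset.sum_range_add]
  congr 1
  · rw [← Finset.sum_range_id, ← Finset.sum_range_reflect]
    apply Finset.sum_congr rfl
    intro i hi
    rw [Finset.mem_range] at hi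
    rw [if_pos (by omega)]
    omega
  · rw [Nat.add_sub_cancel_left]
    have : ∀ k, ∑ j ∈ Finset.range k, (2 * j + 1) = k ^ 2 := by
      intro k
      induction k with
      | zero => rfl
      | succ k ih => rw [Finset.sum_range_succ, ih]; ring
    rw [← this k, ← Finset.sum_range_reflect]
    apply Finset.sum_congr rfl
    intro i hi
    rw [Finset.mem_range] at hi
    rw [if_neg (by omega)]
    omega

end Numeric

/-- counts `X`, `Y`, `Z` of chambers of a ratio-sharp EKR-set relative
to a fixed totally isotropic `s`-space `S`. -/
theorem stmt_6 {F V : Type} [Field F] [Fintype F] [AddCommGroup V] [Module F V]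
    [FiniteDimensional F V] (n q : ℕ) (hn : 3 ≤ n) (hq : Fintype.card F = q)
    (B : V →ₗ[F] V →ₗ[F] F) (halt : IsAltForm B) (hnd : NondegForm B)
    (hdim : Module.finrank F V = 2 * n)
    (𝓕 : Set (SFlag B (Finset.Icc 1 n))) (hEKR : IsEKRFlags 𝓕)
    (hsharp : (𝓕.ncard : ℝ) =
      (Nat.card (SFlag B (Finset.Icc 1 n)) : ℝ) / ((q : ℝ) ^ n + 1))
    (s : ℕ) (hs : s ∈ Finset.Icc 1 n)
    (S : Submodule F V) (hSiso : IsTotIso B S) (hSrank : Module.finrank F S = s) :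
    -- (a)
    (({C ∈ 𝓕 | S ⊓ bperp B (SFlag.space C s) = ⊥}.ncard : ℝ) =
        (q : ℝ) ^ (2 * n * s - s * (3 * s - 1) / 2 - n) *
          (zpol q s * zpol q (n - s) * PhiP q n s n -
            ({C ∈ 𝓕 | SFlag.space C s = S}.ncard : ℝ)))
    ∧
    -- (b)
    (Heavy 𝓕 s S →
      ({C ∈ 𝓕 | SFlag.space C s = S}.ncard : ℝ) =
          zpol q s * zpol q (n - s) * PhiP q n s n ∧
      ({C ∈ 𝓕 | SFlag.space C s ≠ S ∧ S ⊓ bperp B (SFlag.space C s) ≠ ⊥}.ncard : ℝ) =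
          PhiP q n 1 n * zpol q n - zpol q s * zpol q (n - s) * PhiP q n s n)
    ∧
    -- (c)
    (¬ Heavy 𝓕 s S →
      ({C ∈ 𝓕 | SFlag.space C s = S}.ncard : ℝ) ≤
          zpol q s * zpol q (n - s) * PhiP q n s n -
            (q : ℝ) ^ (s * (s - 1) / 2 + (n - s) ^ 2) ∧
      ({C ∈ 𝓕 | SFlag.space C s ≠ S ∧ S ⊓ bperp B (SFlag.space C s) ≠ ⊥}.ncard : ℝ) ≤
          PhiP q n 1 n * zpol q n - zpol q s * zpol q (n - s) * PhiP q n s n -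
            ((q : ℝ) ^ (2 * n * s - s * (3 * s - 1) / 2 - n) - 1) *
              (q : ℝ) ^ (s * (s - 1) / 2 + (n - s) ^ 2)) := by
  have hq1 : 1 < q := hq ▸ Fintype.one_lt_card
  have hq1' : (1:ℝ) < q := by exact_mod_cast hq1
  obtain ⟨hs1, hsn⟩ := Finset.mem_Icc.mp hs
  have hVfin : Finite V := Module.finite_of_finite F
  have hfin : Finite (Cham B n) := Cham.finite
  have hft : Fintype (Cham B n) := Fintype.ofFinite _
  have hmain := main_Y hq halt hnd hdim 𝓕 hEKR hsharp s hs1 hsn S hSiso hSrank (by omega)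
  have hP := count_on hq halt hnd hdim s hsn S hSiso hSrank
  rw [prod_count hq1 hsn] at hP
  have hT := count_on (B := B) hq halt hnd hdim 0 (Nat.zero_le n) ⊥
    (by intro u hu w _; simp at hu; simp [hu]) (by simp)
  rw [prod_count hq1 (Nat.zero_le n)] at hT
  have hN : {C : Cham B n | C.space 0 = ⊥} = Set.univ := by
    ext C; simp [C.zero]
  rw [hN, Set.ncard_univ] at hT
  rw [hT, total_count hq1 (by omega)] at hsharp
  rw [prod_expD q hsn, exps hs1 hsn, hP,
    pow_add (q:ℝ) (2 * n * s - s * (3 * s - 1) / 2 - n)] at hmain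
  have hopp : ∀ C : Cham B n, bperp B (C.space s) ⊓ S = ⊥ →
      ({D : Cham B n | D.space s = S ∧ FlagOpp C D}.ncard : ℝ) =
        (q : ℝ) ^ (s * (s - 1) / 2 + (n - s) ^ 2) := by
    intro C hC
    rw [count_opp hq halt hnd hdim s hsn S hSiso hSrank C hC, prod_expD q hsn]
  -- the partition
  have hpart : (𝓕.ncard : ℝ) = ({C ∈ 𝓕 | SFlag.space C s = S}.ncard : ℝ) +
      ({C ∈ 𝓕 | S ⊓ bperp B (SFlag.space C s) = ⊥}.ncard : ℝ) +
      ({C ∈ 𝓕 | SFlag.space C s ≠ S ∧ S ⊓ bperp B (SFlag.space C s) ≠ ⊥}.ncard : ℝ) := by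
    have hSne : S ⊓ bperp B S ≠ ⊥ := by
      rw [inf_eq_left.mpr (iso_le.mp hSiso)]
      rintro rfl
      rw [finrank_bot] at hSrank
      omega
    have e1 : 𝓕 = ({C ∈ 𝓕 | SFlag.space C s = S} ∪
        {C ∈ 𝓕 | S ⊓ bperp B (SFlag.space C s) = ⊥}) ∪
        {C ∈ 𝓕 | SFlag.space C s ≠ S ∧ S ⊓ bperp B (SFlag.space C s) ≠ ⊥} := by
      ext C
      simp only [Set.mem_union, Set.mem_ofPred_eq]
      tauto
    have e2 : Disjoint {C ∈ 𝓕 | SFlag.space C s = S}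
        {C ∈ 𝓕 | S ⊓ bperp B (SFlag.space C s) = ⊥} := by
      rw [Set.disjoint_left]
      rintro C ⟨-, h1⟩ ⟨-, h2⟩
      rw [h1] at h2
      exact hSne h2
    have e3 : Disjoint ({C ∈ 𝓕 | SFlag.space C s = S} ∪
        {C ∈ 𝓕 | S ⊓ bperp B (SFlag.space C s) = ⊥})
        {C ∈ 𝓕 | SFlag.space C s ≠ S ∧ S ⊓ bperp B (SFlag.space C s) ≠ ⊥} := by
      rw [Set.disjoint_left]
      rintro C (⟨-, h1⟩ | ⟨-, h1⟩) ⟨-, h2, h3⟩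
      · exact h2 h1
      · exact h3 h1
    conv_lhs => rw [e1]
    rw [Set.ncard_union_eq e3 (Set.toFinite _) (Set.toFinite _),
      Set.ncard_union_eq e2 (Set.toFinite _) (Set.toFinite _)]
    push_cast
    ring
  rw [hsharp] at hpart
  set X : ℝ := ({C ∈ 𝓕 | SFlag.space C s = S}.ncard : ℝ) with hX
  set Y : ℝ := ({C ∈ 𝓕 | S ⊓ bperp B (SFlag.space C s) = ⊥}.ncard : ℝ) with hY
  set Z : ℝ := ({C ∈ 𝓕 | SFlag.space C s ≠ S ∧ S ⊓ bperp B (SFlag.space C s) ≠ ⊥}.ncard : ℝ)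
    with hZ
  set P : ℝ := zpol q s * zpol q (n - s) * PhiP q n s n with hPdef
  set W : ℝ := PhiP q n 1 n * zpol q n with hW
  have hD0 : (0:ℝ) < (q : ℝ) ^ (s * (s - 1) / 2 + (n - s) ^ 2) := by positivity
  have hE1 : (1:ℝ) ≤ (q : ℝ) ^ (2 * n * s - s * (3 * s - 1) / 2 - n) := one_le_pow₀ hq1'.le
  set QD : ℝ := (q : ℝ) ^ (s * (s - 1) / 2 + (n - s) ^ 2) with hQD
  set QE : ℝ := (q : ℝ) ^ (2 * n * s - s * (3 * s - 1) / 2 - n) with hQE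
  have ha : Y = QE * (P - X) := by
    apply mul_left_cancel₀ hD0.ne'
    rw [hmain]; ring
  refine ⟨ha, ?_, ?_⟩
  · intro hheavy
    have hXP : X = P := by
      rw [← hP, hX]
      congr 2
      ext C
      simp only [Set.mem_ofPred_eq]
      exact ⟨fun h => h.2, fun h => ⟨hheavy C h, h⟩⟩
    refine ⟨hXP, ?_⟩
    rw [hXP, sub_self, mul_zero] at ha
    linarith
  · intro hlight
    have hXlt : X < P := by
      unfold Heavy at hlight
      push Not at hlight
      obtain ⟨C, hC, hCF⟩ := hlight
      rw [← hP, hX]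
      exact_mod_cast Set.ncard_lt_ncard (s := {C ∈ 𝓕 | SFlag.space C s = S})
        (t := {C : Cham B n | C.space s = S})
        ⟨fun D hD => hD.2, fun h => hCF (h (show C ∈ {C : Cham B n | C.space s = S} from hC)).1⟩
        (Set.toFinite _)
    have hYpos : 0 < Y := by
      rw [ha]
      exact mul_pos (by linarith) (by linarith)
    have hne : {C ∈ 𝓕 | S ⊓ bperp B (SFlag.space C s) = ⊥}.Nonempty := by
      rw [← Set.ncard_pos (Set.toFinite _)]
      rw [hY] at hYpos
      exact_mod_cast hYpos
    obtain ⟨C, hCF, hC⟩ := hne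
    have hc := hopp C (by rw [inf_comm]; exact hC)
    have hXle : X ≤ P - QD := by
      have hdis : Disjoint {C ∈ 𝓕 | SFlag.space C s = S}
          {D : Cham B n | D.space s = S ∧ FlagOpp C D} := by
        rw [Set.disjoint_left]
        rintro D ⟨h1, -⟩ ⟨-, h2⟩
        exact hEKR C hCF D h1 h2
      have hle := Set.ncard_le_ncard (s := {C ∈ 𝓕 | SFlag.space C s = S} ∪
          {D : Cham B n | D.space s = S ∧ FlagOpp C D}) (t := {C : Cham B n | C.space s = S})
        (by rintro D (⟨-, h⟩ | ⟨h, -⟩) <;> exact h) (Set.toFinite _)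
      rw [Set.ncard_union_eq hdis (Set.toFinite _) (Set.toFinite _)] at hle
      have hle' : X + ({D : Cham B n | D.space s = S ∧ FlagOpp C D}.ncard : ℝ) ≤
          ({C : Cham B n | C.space s = S}.ncard : ℝ) := by
        rw [hX]; exact_mod_cast hle
      rw [hc, hP] at hle'
      linarith
    refine ⟨hXle, ?_⟩
    have hZe : Z = W - P - (QE - 1) * (P - X) := by rw [ha] at hpart; linarith
    rw [hZe]
    have := mul_le_mul_of_nonneg_left (show QD ≤ P - X by linarith) (show 0 ≤ QE - 1 by linarith)
    linarith
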